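/- arXiv:math/0608144 — 2 statements merged into one kernel-verified Lean document; each statement's English description precedes it below -/
import Mathlib

section
/- Assume in addition that C is triangulated (the octahedral axiom holds). For all objects X, Y, Z, M, L, L' of C the following equality of rational numbers holds: ( |Hom(M ⊕ X, L)^{Y,Z[1]}_{L'[1]}| / |Aut(L)| ) · {M ⊕ X, L} / ( {L',L} · {L,L} ) = ( |Hom(L', M ⊕ X)^{Y,Z[1]}_L| / |Aut(L')| ) · {L', M ⊕ X} / ( {L',L} · {L',L'} ). -/
open CategoryTheory CategoryTheory.Limits CategoryTheory.Pretriangulated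

universe v u

/-- `{X,Y} := ∏_{i>0} |Hom(X[i],Y)|^{(-1)^i}`, as a rational number. -/
noncomputable def homAlternatingProd {C : Type u} [CategoryTheory.Category.{v} C]
    [HasShift C ℤ] (X Y : C) : ℚ :=
  ∏' i : ℕ, ((Nat.card (X⟦(i : ℤ) + 1⟧ ⟶ Y) : ℚ) ^ ((-1 : ℤ) ^ (i + 1)))

/-- `Cone(u) ≅ W`: there are morphisms completing `u` to a distinguished triangle with
third vertex `W`. -/
def ConeIs {C : Type u} [CategoryTheory.Category.{v} C] [Preadditive C] [HasZeroObject C]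
    [HasShift C ℤ] [∀ i : ℤ, (CategoryTheory.shiftFunctor C i).Additive] [Pretriangulated C]
    {A B : C} (u : A ⟶ B) (W : C) : Prop :=
  ∃ (v : B ⟶ W) (w : W ⟶ A⟦(1 : ℤ)⟧), Triangle.mk u v w ∈ distTriang C

/-!
Compositions are written from left to right. Call `L' ⟶ N ⟶ L` a triangle pair if it extends to a
distinguished triangle. For fixed `L'`, `N` and `L` the triangle pairs with a given second (first)
morphism form one orbit under `Aut L'` (`Aut L`), so by double counting the theorem amounts to
comparing the stabilizers of `l` and `l'` for one pair `(l', l)`, with connecting morphism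
`d : L ⟶ L'[1]`. An automorphism of `L` fixing `l` has the form `1 + d s` with `s : L'[1] ⟶ L`, and
the shift of an automorphism of `L'` fixing `l'` has the form `1 + s d`. As `1 + d s` is invertible
exactly when `1 + s d` is, the stabilizers of `l` and `l'` have orders in the ratio of
`|d Hom(L'[1], L)|` to `|Hom(L'[1], L) d|`, and the long exact sequences of `Hom(-, L)` and
`Hom(L', -)` express these two numbers through alternating products. For `N = M ⊕ X` the octahedral
axiom matches the conditions on the cones of the components of `l` and of `l'`.
-/

namespace TriangulatedHall

section Counting

/-- The alternating product `∏_{i ≥ 0} x_i ^ ((-1) ^ (i + 1))`, through which `homAlternatingProd`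
is computed. It is meant for sequences that are eventually `1`. -/
noncomputable def alternatingProd (x : ℕ → ℕ) : ℚ :=
  ∏' i : ℕ, (x i : ℚ) ^ ((-1 : ℤ) ^ (i + 1))

lemma alternatingProd_eq_prod_range {x : ℕ → ℕ} {n : ℕ} (hx : ∀ i ≥ n, x i = 1) :
    alternatingProd x = ∏ i ∈ Finset.range n, (x i : ℚ) ^ ((-1 : ℤ) ^ (i + 1)) :=
  tprod_eq_prod fun i hi => by
    rw [hx i (by simpa using hi), Nat.cast_one, one_zpow]

lemma alternatingProd_ne_zero {x : ℕ → ℕ} (hx₀ : ∀ i, x i ≠ 0)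
    (hx₁ : ∀ᶠ i in Filter.atTop, x i = 1) : alternatingProd x ≠ 0 := by
  obtain ⟨n, hn⟩ := Filter.eventually_atTop.1 hx₁
  rw [alternatingProd_eq_prod_range hn]
  exact Finset.prod_ne_zero_iff.2 fun i _ => zpow_ne_zero _ (Nat.cast_ne_zero.2 (hx₀ i))

lemma prod_range_mul_succ_zpow_neg_one_pow {G₀ : Type*} [CommGroupWithZero G₀] {c : ℕ → G₀}
    (hc : ∀ i, c i ≠ 0) (n : ℕ) :
    (∏ i ∈ Finset.range n, (c i * c (i + 1)) ^ ((-1 : ℤ) ^ (i + 1))) * c 0 =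
      c n ^ ((-1 : ℤ) ^ n) := by
  induction n with
  | zero => simp
  | succ n ih =>
    rw [Finset.prod_range_succ, mul_right_comm, ih, mul_zpow, ← mul_assoc, ← zpow_add₀ (hc n),
      pow_succ (-1 : ℤ) n, mul_neg_one, add_neg_cancel, zpow_zero, one_mul]

/-- The relation between `a`, `b`, `d` and `c` holds when these are the orders of the terms and of
the images of the connecting maps in a long exact sequence. -/
lemma alternatingProd_mul_alternatingProd_mul {a b d c : ℕ → ℕ}
    (ha₀ : ∀ i, a i ≠ 0) (ha₁ : ∀ᶠ i in Filter.atTop, a i = 1)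
    (hd₀ : ∀ i, d i ≠ 0) (hd₁ : ∀ᶠ i in Filter.atTop, d i = 1)
    (h : ∀ i, a i * d i = b i * (c i * c (i + 1))) :
    alternatingProd a * alternatingProd d * c 0 = alternatingProd b := by
  obtain ⟨n, hn⟩ := Filter.eventually_atTop.1 (ha₁.and hd₁)
  have hprod : ∀ i, b i * (c i * c (i + 1)) ≠ 0 := fun i => h i ▸ mul_ne_zero (ha₀ i) (hd₀ i)
  have hc₀ : ∀ i, (c i : ℚ) ≠ 0 := fun i =>
    Nat.cast_ne_zero.2 (left_ne_zero_of_mul (right_ne_zero_of_mul (hprod i)))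
  have hbc : ∀ i ≥ n, b i = 1 ∧ c i = 1 := fun i hi => by
    have := h i
    rw [(hn i hi).1, (hn i hi).2, mul_one, eq_comm, mul_eq_one, mul_eq_one] at this
    exact ⟨this.1, this.2.1⟩
  have hterm : ∀ i, (a i : ℚ) ^ ((-1 : ℤ) ^ (i + 1)) * (d i : ℚ) ^ ((-1 : ℤ) ^ (i + 1)) =
      (b i : ℚ) ^ ((-1 : ℤ) ^ (i + 1)) * ((c i : ℚ) * c (i + 1)) ^ ((-1 : ℤ) ^ (i + 1)) := by
    intro i
    rw [← mul_zpow, ← mul_zpow]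
    exact_mod_cast congrArg (fun m : ℕ => (m : ℚ) ^ ((-1 : ℤ) ^ (i + 1))) (h i)
  rw [alternatingProd_eq_prod_range fun i hi => (hn i hi).1,
    alternatingProd_eq_prod_range fun i hi => (hn i hi).2,
    alternatingProd_eq_prod_range fun i hi => (hbc i hi).1, ← Finset.prod_mul_distrib,
    Finset.prod_congr rfl fun i _ => hterm i, Finset.prod_mul_distrib, mul_assoc,
    prod_range_mul_succ_zpow_neg_one_pow hc₀ n, (hbc n le_rfl).2, Nat.cast_one, one_zpow, mul_one]

lemma card_eq_card_mul_card_of_fiber_equiv {α β γ : Type*} (f : α → β)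
    (e : ∀ b, Nonempty ({a // f a = b} ≃ γ)) : Nat.card α = Nat.card β * Nat.card γ := by
  rw [← Nat.card_prod]
  exact Nat.card_congr ((Equiv.sigmaFiberEquiv f).symm.trans
    ((Equiv.sigmaCongrRight fun b => (e b).some).trans (Equiv.sigmaEquivProd β γ)))

lemma card_ker_mul_card_range {A B : Type*} [AddGroup A] [AddGroup B] (f : A →+ B) :
    Nat.card f.ker * Nat.card f.range = Nat.card A := by
  rw [← AddSubgroup.index_ker, AddSubgroup.card_mul_index]

lemma card_mul_card_of_exact {A B D E : Type*} [AddGroup A] [AddGroup B] [AddGroup D] [AddGroup E]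
    {f : A →+ B} {g : B →+ D} {h : D →+ E} (hfg : f.range = g.ker) (hgh : g.range = h.ker) :
    Nat.card A * Nat.card D = Nat.card B * (Nat.card f.ker * Nat.card h.range) := by
  rw [← card_ker_mul_card_range f, ← card_ker_mul_card_range g, ← card_ker_mul_card_range h,
    hfg, hgh]
  ring

/-- Every `b` related to `a` contributes `1 / #{b' | R a b'}` to the count of `a`. -/
lemma card_exists_eq_sum_inv {α β K : Type*} [Fintype α] [Fintype β] [DivisionRing K] [CharZero K]
    (R : α → β → Prop) [DecidableRel R] :
    (Nat.card {a // ∃ b, R a b} : K) =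
      ∑ a, ∑ b, if R a b then (Nat.card {b' // R a b'} : K)⁻¹ else 0 := by
  rw [Nat.card_eq_fintype_card, Fintype.card_subtype, Finset.card_filter, Nat.cast_sum]
  refine Finset.sum_congr rfl fun a _ => ?_
  rw [← Finset.sum_filter, Finset.sum_const, ← Fintype.card_subtype, ← Nat.card_eq_fintype_card,
    nsmul_eq_mul]
  split_ifs with hab
  · obtain ⟨b, hb⟩ := hab
    have : Nonempty {b' // R a b'} := ⟨⟨b, hb⟩⟩
    rw [Nat.cast_one, mul_inv_cancel₀ (Nat.cast_ne_zero.2 Nat.card_pos.ne')]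
  · have : IsEmpty {b' // R a b'} := ⟨fun b => hab ⟨b.1, b.2⟩⟩
    rw [Nat.card_of_isEmpty, Nat.cast_zero, zero_mul]

lemma mul_card_exists_eq_mul_card_exists {α β K : Type*} [Finite α] [Finite β] [Field K]
    [CharZero K] (R : α → β → Prop) (u v : K)
    (h : ∀ a b, R a b → u * Nat.card {a' // R a' b} = v * Nat.card {b' // R a b'}) :
    u * Nat.card {a // ∃ b, R a b} = v * Nat.card {b // ∃ a, R a b} := by
  classical
  have := Fintype.ofFinite α
  have := Fintype.ofFinite β
  rw [card_exists_eq_sum_inv, card_exists_eq_sum_inv fun b a => R a b, Finset.sum_comm,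
    Finset.mul_sum, Finset.mul_sum]
  refine Finset.sum_congr rfl fun b _ => ?_
  rw [Finset.mul_sum, Finset.mul_sum]
  refine Finset.sum_congr rfl fun a _ => ?_
  split_ifs with hab
  · have : Nonempty {a' // R a' b} := ⟨⟨a, hab⟩⟩
    have : Nonempty {b' // R a b'} := ⟨⟨b, hab⟩⟩
    rw [← div_eq_mul_inv, ← div_eq_mul_inv, div_eq_div_iff
      (Nat.cast_ne_zero.2 Nat.card_pos.ne') (Nat.cast_ne_zero.2 Nat.card_pos.ne')]
    exact h a b hab
  · rw [mul_zero, mul_zero]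

end Counting

section Preadditive

open Preadditive

variable {C : Type u} [Category.{v} C] [Preadditive C]

lemma card_hom_ne_zero (X Y : C) [Finite (X ⟶ Y)] : Nat.card (X ⟶ Y) ≠ 0 :=
  Nat.card_pos.ne'

lemma isIso_id_add_comp {A B : C} {f : A ⟶ B} {g : B ⟶ A} (h : IsIso (𝟙 A + f ≫ g)) :
    IsIso (𝟙 B + g ≫ f) := by
  -- The inverse is the one suggested by the geometric series.
  refine ⟨𝟙 B - g ≫ inv (𝟙 A + f ≫ g) ≫ f, ?_, ?_⟩
  · have hinv : f ≫ g ≫ inv (𝟙 A + f ≫ g) = 𝟙 A - inv (𝟙 A + f ≫ g) := by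
      rw [eq_sub_iff_add_eq', ← Category.assoc]
      simpa only [add_comp, Category.id_comp] using IsIso.hom_inv_id (𝟙 A + f ≫ g)
    simp only [add_comp, comp_sub, Category.assoc, Category.id_comp, Category.comp_id,
      reassoc_of% hinv, sub_comp]
    abel
  · have hinv : inv (𝟙 A + f ≫ g) ≫ f ≫ g = 𝟙 A - inv (𝟙 A + f ≫ g) := by
      rw [eq_sub_iff_add_eq']
      simpa only [comp_add, Category.comp_id] using IsIso.inv_hom_id (𝟙 A + f ≫ g)
    simp only [comp_add, sub_comp, Category.assoc, Category.id_comp, Category.comp_id,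
      reassoc_of% hinv, comp_sub]
    abel

lemma isIso_id_add_comp_iff {A B : C} (f : A ⟶ B) (g : B ⟶ A) :
    IsIso (𝟙 A + f ≫ g) ↔ IsIso (𝟙 B + g ≫ f) :=
  ⟨isIso_id_add_comp, isIso_id_add_comp⟩

lemma card_aut_sub_id_mem_range_mul_card {X : C} {G : Type*} [AddGroup G] (φ : G →+ (X ⟶ X)) :
    Nat.card {a : Aut X // a.hom - 𝟙 X ∈ φ.range} * Nat.card G =
      Nat.card {s : G // IsIso (𝟙 X + φ s)} * Nat.card φ.range := by
  let toAut (s : {s : G // IsIso (𝟙 X + φ s)}) : {a : Aut X // a.hom - 𝟙 X ∈ φ.range} :=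
    ⟨@asIso _ _ _ _ (𝟙 X + φ s) s.2, s, (add_sub_cancel_left _ _).symm⟩
  have toAut_eq_iff : ∀ s a, toAut s = a ↔ φ s = a.1.hom - 𝟙 X := fun s a =>
    Subtype.ext_iff.trans (Iso.ext_iff.trans eq_sub_iff_add_eq'.symm)
  have isIso_id_add : ∀ {s : G} {a : Aut X}, φ s = a.hom - 𝟙 X → IsIso (𝟙 X + φ s) :=
    fun {s a} hs => by
      rw [hs, add_sub_cancel]
      exact Iso.isIso_hom (show X ≅ X from a)
  have fiber : ∀ a, Nonempty ({s // toAut s = a} ≃ φ.ker) := by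
    rintro ⟨a, t, ht⟩
    exact ⟨Equiv.trans
      { toFun := fun s => ⟨s.1, ((toAut_eq_iff _ _).1 s.2).trans ht.symm⟩
        invFun := fun s => ⟨⟨s.1, isIso_id_add (s.2.trans ht)⟩, (toAut_eq_iff _ _).2 (s.2.trans ht)⟩
        left_inv := fun _ => rfl
        right_inv := fun _ => rfl } (φ.fiberEquivKer t)⟩
  rw [card_eq_card_mul_card_of_fiber_equiv toAut fiber, ← card_ker_mul_card_range φ, mul_assoc]

lemma card_range_leftComp_of_iso {A B U U' : C} (f : A ⟶ B) (e : U ≅ U') :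
    Nat.card (leftComp U f).range = Nat.card (leftComp U' f).range := by
  refine Nat.card_congr (e.homToEquiv.subtypeEquiv fun g => ⟨?_, ?_⟩)
  · rintro ⟨s, rfl⟩
    exact ⟨s ≫ e.hom, (Category.assoc _ _ _).symm⟩
  · rintro ⟨s, hs⟩
    exact ⟨s ≫ e.inv, (Category.assoc _ _ _).symm.trans ((Iso.comp_inv_eq e).2 hs)⟩

lemma card_range_rightComp_of_iso {A B V V' : C} (f : A ⟶ B) (e : V ≅ V') :
    Nat.card (rightComp V f).range = Nat.card (rightComp V' f).range := by
  refine Nat.card_congr (e.homFromEquiv.subtypeEquiv fun g => ⟨?_, ?_⟩)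
  · rintro ⟨s, rfl⟩
    exact ⟨e.inv ≫ s, Category.assoc _ _ _⟩
  · rintro ⟨s, hs⟩
    exact ⟨e.hom ≫ s, (Category.assoc _ _ _).trans ((Iso.eq_inv_comp e).1 hs)⟩

end Preadditive

section Exactness

open Preadditive

variable {C : Type u} [Category.{v} C] [Preadditive C] [HasZeroObject C] [HasShift C ℤ]
  [∀ i : ℤ, (shiftFunctor C i).Additive] [Pretriangulated C] {T : Triangle C}

lemma range_leftComp_mor₂ (hT : T ∈ distTriang C) (U : C) :
    (leftComp U T.mor₂).range = (leftComp U T.mor₁).ker := by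
  ext f
  refine ⟨?_, fun hf => (Triangle.yoneda_exact₂ T hT f hf).imp fun _ => Eq.symm⟩
  rintro ⟨g, rfl⟩
  exact comp_distTriang_mor_zero₁₂_assoc T hT g |>.trans zero_comp

lemma range_leftComp_mor₃ (hT : T ∈ distTriang C) (U : C) :
    (leftComp U T.mor₃).range = (leftComp U T.mor₂).ker :=
  range_leftComp_mor₂ (rot_of_distTriang _ hT) U

lemma range_leftComp_mor₁ (hT : T ∈ distTriang C) (U : C) :
    (leftComp U T.mor₁).range =
      ((leftComp (U⟦(1 : ℤ)⟧) T.mor₃).comp (shiftFunctor C (1 : ℤ)).mapAddHom).ker := by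
  ext f
  constructor
  · rintro ⟨g, rfl⟩
    change T.mor₃ ≫ (T.mor₁ ≫ g)⟦(1 : ℤ)⟧' = 0
    rw [Functor.map_comp, comp_distTriang_mor_zero₃₁_assoc T hT, zero_comp]
  · intro hf
    obtain ⟨g, hg⟩ : ∃ g : T.obj₂⟦(1 : ℤ)⟧ ⟶ U⟦(1 : ℤ)⟧, f⟦(1 : ℤ)⟧' = (-T.mor₁⟦(1 : ℤ)⟧') ≫ g :=
      Triangle.yoneda_exact₃ _ (rot_of_distTriang _ hT) (f⟦(1 : ℤ)⟧') hf
    obtain ⟨g, rfl⟩ := (shiftFunctor C (1 : ℤ)).map_surjective g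
    refine ⟨-g, (shiftFunctor C (1 : ℤ)).map_injective ?_⟩
    change (T.mor₁ ≫ (-g))⟦(1 : ℤ)⟧' = f⟦(1 : ℤ)⟧'
    rw [hg, Functor.map_comp, Functor.map_neg, comp_neg, neg_comp]

lemma range_rightComp_mor₁ (hT : T ∈ distTriang C) (V : C) :
    (rightComp V T.mor₁).range = (rightComp V T.mor₂).ker := by
  ext f
  refine ⟨?_, fun hf => (Triangle.coyoneda_exact₂ T hT f hf).imp fun _ => Eq.symm⟩
  rintro ⟨g, rfl⟩
  change (g ≫ T.mor₁) ≫ T.mor₂ = 0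
  rw [Category.assoc, comp_distTriang_mor_zero₁₂ T hT, comp_zero]

lemma range_rightComp_mor₂ (hT : T ∈ distTriang C) (V : C) :
    (rightComp V T.mor₂).range = (rightComp V T.mor₃).ker :=
  range_rightComp_mor₁ (rot_of_distTriang _ hT) V

lemma range_rightComp_mor₃ (hT : T ∈ distTriang C) (V : C) :
    (rightComp V T.mor₃).range = (rightComp V (T.mor₁⟦(1 : ℤ)⟧')).ker := by
  ext f
  refine ⟨?_, fun hf => (Triangle.coyoneda_exact₁ T hT f hf).imp fun _ => Eq.symm⟩
  rintro ⟨g, rfl⟩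
  change (g ≫ T.mor₃) ≫ T.mor₁⟦(1 : ℤ)⟧' = 0
  rw [Category.assoc, comp_distTriang_mor_zero₃₁ T hT, comp_zero]

lemma card_hom_obj₃_mul_card_hom_obj₁ (hT : T ∈ distTriang C) (U : C) :
    Nat.card (T.obj₃ ⟶ U) * Nat.card (T.obj₁ ⟶ U) =
      Nat.card (T.obj₂ ⟶ U) * (Nat.card (leftComp U T.mor₃).range *
        Nat.card (leftComp (U⟦(1 : ℤ)⟧) T.mor₃).range) := by
  rw [card_mul_card_of_exact (range_leftComp_mor₂ hT U) (range_leftComp_mor₁ hT U),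
    range_leftComp_mor₃ hT U, AddMonoidHom.range_comp,
    AddMonoidHom.range_eq_top.2 (shiftFunctor C (1 : ℤ)).map_surjective, AddMonoidHom.range_eq_map]

lemma card_hom_to_obj₁_mul_card_hom_to_obj₃ (hT : T ∈ distTriang C) (V : C) :
    Nat.card (V ⟶ T.obj₁) * Nat.card (V ⟶ T.obj₃) =
      Nat.card (V ⟶ T.obj₂) * (Nat.card (rightComp (V⟦(1 : ℤ)⟧) T.mor₃).range *
        Nat.card (rightComp V T.mor₃).range) := by
  rw [card_mul_card_of_exact (range_rightComp_mor₁ hT V) (range_rightComp_mor₂ hT V),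
    range_rightComp_mor₃ hT (V⟦(1 : ℤ)⟧)]
  congr 2
  refine Nat.card_congr (((Functor.FullyFaithful.ofFullyFaithful
    (shiftFunctor C (1 : ℤ))).homEquiv).subtypeEquiv fun f => ?_)
  change f ≫ T.mor₁ = 0 ↔ f⟦(1 : ℤ)⟧' ≫ T.mor₁⟦(1 : ℤ)⟧' = 0
  rw [← Functor.map_comp, Functor.map_eq_zero_iff]

end Exactness

section HomAlternatingProd

open Preadditive

variable {C : Type u} [Category.{v} C] [HasShift C ℤ]

lemma card_hom_shift_neg (X W : C) (n : ℤ) :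
    Nat.card (X ⟶ W⟦-n⟧) = Nat.card (X⟦n⟧ ⟶ W) :=
  Nat.card_congr ((shiftEquiv C n).toAdjunction.homEquiv X W).symm

variable [Preadditive C]

/-- The condition that `Hom(X[i], Y)` vanishes for all sufficiently large `i`: the category is left
locally homologically finite if this holds for all pairs of objects. -/
def LeftHomologicallyFinite (X Y : C) : Prop :=
  ∃ N : ℕ, ∀ i ≥ N, ∀ f : X⟦(i : ℤ)⟧ ⟶ Y, f = 0

lemma LeftHomologicallyFinite.eventually_card_eq_one {X Y : C} (h : LeftHomologicallyFinite X Y) :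
    ∀ᶠ i : ℕ in Filter.atTop, Nat.card (X⟦(i : ℤ) + 1⟧ ⟶ Y) = 1 := by
  obtain ⟨N, hN⟩ := h
  filter_upwards [Filter.eventually_ge_atTop N] with i hi
  have hzero : ∀ f : X⟦(i : ℤ) + 1⟧ ⟶ Y, f = 0 := by exact_mod_cast hN (i + 1) (by omega)
  have : Subsingleton (X⟦(i : ℤ) + 1⟧ ⟶ Y) := ⟨fun f g => (hzero f).trans (hzero g).symm⟩
  exact Nat.card_eq_one_iff_unique.2 ⟨this, ⟨0⟩⟩

variable [∀ X Y : C, Finite (X ⟶ Y)]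

lemma homAlternatingProd_ne_zero {X Y : C} (h : LeftHomologicallyFinite X Y) :
    homAlternatingProd X Y ≠ 0 :=
  alternatingProd_ne_zero (fun _ => card_hom_ne_zero _ _) h.eventually_card_eq_one

variable [HasZeroObject C] [∀ i : ℤ, (shiftFunctor C i).Additive] [Pretriangulated C]
  {T : Triangle C}

lemma homAlternatingProd_obj₁_mul_obj₃ (hT : T ∈ distTriang C) {W : C}
    (h₁ : LeftHomologicallyFinite W T.obj₁) (h₃ : LeftHomologicallyFinite W T.obj₃) :
    homAlternatingProd W T.obj₁ * homAlternatingProd W T.obj₃ *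
      Nat.card (rightComp (W⟦(1 : ℤ)⟧) T.mor₃).range = homAlternatingProd W T.obj₂ := by
  have hexact : ∀ i : ℕ, Nat.card (W⟦(i : ℤ) + 1⟧ ⟶ T.obj₁) * Nat.card (W⟦(i : ℤ) + 1⟧ ⟶ T.obj₃) =
      Nat.card (W⟦(i : ℤ) + 1⟧ ⟶ T.obj₂) * (Nat.card (rightComp (W⟦(i : ℤ) + 1⟧) T.mor₃).range *
        Nat.card (rightComp (W⟦((i + 1 : ℕ) : ℤ) + 1⟧) T.mor₃).range) := fun i => by
    have hshift : W⟦((i + 1 : ℕ) : ℤ) + 1⟧ ≅ (W⟦(i : ℤ) + 1⟧)⟦(1 : ℤ)⟧ :=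
      (shiftFunctorAdd' C _ _ _ (by push_cast; rfl)).app W
    rw [card_range_rightComp_of_iso _ hshift, card_hom_to_obj₁_mul_card_hom_to_obj₃ hT,
      mul_comm (Nat.card (rightComp (W⟦(i : ℤ) + 1⟧) T.mor₃).range)]
  have hone : W⟦((0 : ℕ) : ℤ) + 1⟧ ≅ W⟦(1 : ℤ)⟧ := eqToIso (by rw [Nat.cast_zero, zero_add])
  rw [← card_range_rightComp_of_iso _ hone]
  exact alternatingProd_mul_alternatingProd_mul
    (c := fun i : ℕ => Nat.card (rightComp (W⟦(i : ℤ) + 1⟧) T.mor₃).range)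
    (fun _ => card_hom_ne_zero _ _) h₁.eventually_card_eq_one
    (fun _ => card_hom_ne_zero _ _) h₃.eventually_card_eq_one hexact

lemma homAlternatingProd_obj₃_mul_obj₁ (hT : T ∈ distTriang C) {W : C}
    (h₃ : LeftHomologicallyFinite T.obj₃ W) (h₁ : LeftHomologicallyFinite T.obj₁ W) :
    homAlternatingProd T.obj₃ W * homAlternatingProd T.obj₁ W *
      Nat.card (leftComp W T.mor₃).range = homAlternatingProd T.obj₂ W := by
  have hexact : ∀ i : ℕ, Nat.card (T.obj₃⟦(i : ℤ) + 1⟧ ⟶ W) * Nat.card (T.obj₁⟦(i : ℤ) + 1⟧ ⟶ W) =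
      Nat.card (T.obj₂⟦(i : ℤ) + 1⟧ ⟶ W) * (Nat.card (leftComp (W⟦-(i : ℤ)⟧) T.mor₃).range *
        Nat.card (leftComp (W⟦-((i + 1 : ℕ) : ℤ)⟧) T.mor₃).range) := fun i => by
    have hshift : W⟦-(i : ℤ)⟧ ≅ (W⟦-((i : ℤ) + 1)⟧)⟦(1 : ℤ)⟧ :=
      (shiftFunctorAdd' C _ _ _ (by ring)).app W
    rw [card_range_leftComp_of_iso _ hshift, Nat.cast_succ, ← card_hom_shift_neg,
      ← card_hom_shift_neg, ← card_hom_shift_neg, card_hom_obj₃_mul_card_hom_obj₁ hT,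
      mul_comm (Nat.card (leftComp (W⟦-((i : ℤ) + 1)⟧) T.mor₃).range)]
  have hzero : W⟦-((0 : ℕ) : ℤ)⟧ ≅ W := (shiftFunctorZero' C _ (by simp)).app W
  rw [← card_range_leftComp_of_iso _ hzero]
  exact alternatingProd_mul_alternatingProd_mul
    (c := fun i : ℕ => Nat.card (leftComp (W⟦-(i : ℤ)⟧) T.mor₃).range)
    (fun _ => card_hom_ne_zero _ _) h₃.eventually_card_eq_one
    (fun _ => card_hom_ne_zero _ _) h₁.eventually_card_eq_one hexact

end HomAlternatingProd

section AutomorphismOrbits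

variable {C : Type u} [Category.{v} C] {A B : C}

lemma card_aut_ne_zero (A : C) [Finite (A ⟶ A)] : Nat.card (Aut A) ≠ 0 := by
  have : Finite (Aut A) := Finite.of_injective (fun a => a.hom) fun _ _ h => Iso.ext h
  exact Nat.card_pos.ne'

lemma card_comp_aut_mul_card_comp_aut_eq_self (f : A ⟶ B) :
    Nat.card {g // ∃ a : Aut B, f ≫ a.hom = g} * Nat.card {a : Aut B // f ≫ a.hom = f} =
      Nat.card (Aut B) := by
  let : MulAction (Aut B) (A ⟶ B) :=
    { smul a g := g ≫ a.hom
      one_smul g := Category.comp_id g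
      mul_smul a b g := (Category.assoc g b.hom a.hom).symm }
  rw [← Nat.card_prod]
  exact Nat.card_congr (MulAction.orbitProdStabilizerEquivGroup (Aut B) f)

lemma card_aut_comp_mul_card_aut_comp_eq_self (f : A ⟶ B) :
    Nat.card {g // ∃ a : Aut A, a.hom ≫ f = g} * Nat.card {a : Aut A // a.hom ≫ f = f} =
      Nat.card (Aut A) := by
  let : MulAction (Aut A)ᵐᵒᵖ (A ⟶ B) :=
    { smul a g := a.unop.hom ≫ g
      one_smul g := Category.id_comp g
      mul_smul a b g := Category.assoc a.unop.hom b.unop.hom g }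
  rw [← Nat.card_prod, Nat.card_congr (MulOpposite.opEquiv (α := Aut A))]
  refine Nat.card_congr (Equiv.trans (Equiv.prodCongr ?_ ?_)
    (MulAction.orbitProdStabilizerEquivGroup (Aut A)ᵐᵒᵖ f))
  · exact Equiv.subtypeEquivRight fun g => MulOpposite.opEquiv.exists_congr_left
  · exact MulOpposite.opEquiv.subtypeEquiv fun _ => Iff.rfl

end AutomorphismOrbits

section Stabilizers

open Preadditive

variable {C : Type u} [Category.{v} C] [Preadditive C] [HasZeroObject C] [HasShift C ℤ]
  [∀ i : ℤ, (shiftFunctor C i).Additive] [Pretriangulated C] {T : Triangle C}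

lemma card_aut_obj₃_mul_card_hom (hT : T ∈ distTriang C) :
    Nat.card {a : Aut T.obj₃ // T.mor₂ ≫ a.hom = T.mor₂} * Nat.card (T.obj₁⟦(1 : ℤ)⟧ ⟶ T.obj₃) =
      Nat.card {s : T.obj₁⟦(1 : ℤ)⟧ ⟶ T.obj₃ // IsIso (𝟙 T.obj₃ + T.mor₃ ≫ s)} *
        Nat.card (leftComp T.obj₃ T.mor₃).range := by
  refine Eq.trans (congrArg (· * _) (Nat.card_congr (Equiv.subtypeEquivRight fun a => ?_)))
    (card_aut_sub_id_mem_range_mul_card (leftComp T.obj₃ T.mor₃))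
  rw [range_leftComp_mor₃ hT]
  change _ ↔ T.mor₂ ≫ (a.hom - 𝟙 T.obj₃) = 0
  rw [comp_sub, Category.comp_id, sub_eq_zero]

lemma card_aut_obj₁_mul_card_hom (hT : T ∈ distTriang C) :
    Nat.card {a : Aut T.obj₁ // a.hom ≫ T.mor₁ = T.mor₁} * Nat.card (T.obj₁⟦(1 : ℤ)⟧ ⟶ T.obj₃) =
      Nat.card {s : T.obj₁⟦(1 : ℤ)⟧ ⟶ T.obj₃ // IsIso (𝟙 (T.obj₁⟦(1 : ℤ)⟧) + s ≫ T.mor₃)} *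
        Nat.card (rightComp (T.obj₁⟦(1 : ℤ)⟧) T.mor₃).range := by
  refine Eq.trans (congrArg (· * _) (Nat.card_congr ((Functor.FullyFaithful.ofFullyFaithful
    (shiftFunctor C (1 : ℤ))).isoEquiv.subtypeEquiv fun a => ?_)))
    (card_aut_sub_id_mem_range_mul_card (rightComp (T.obj₁⟦(1 : ℤ)⟧) T.mor₃))
  rw [range_rightComp_mor₃ hT]
  change a.hom ≫ T.mor₁ = T.mor₁ ↔
    (a.hom⟦(1 : ℤ)⟧' - 𝟙 (T.obj₁⟦(1 : ℤ)⟧)) ≫ T.mor₁⟦(1 : ℤ)⟧' = 0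
  rw [sub_comp, Category.id_comp, sub_eq_zero, ← Functor.map_comp,
    (shiftFunctor C (1 : ℤ)).map_injective.eq_iff]

lemma card_aut_obj₃_mul_card_range_rightComp [Finite (T.obj₁⟦(1 : ℤ)⟧ ⟶ T.obj₃)]
    (hT : T ∈ distTriang C) :
    Nat.card {a : Aut T.obj₃ // T.mor₂ ≫ a.hom = T.mor₂} *
        Nat.card (rightComp (T.obj₁⟦(1 : ℤ)⟧) T.mor₃).range =
      Nat.card {a : Aut T.obj₁ // a.hom ≫ T.mor₁ = T.mor₁} *
        Nat.card (leftComp T.obj₃ T.mor₃).range := by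
  have hiso : Nat.card {s : T.obj₁⟦(1 : ℤ)⟧ ⟶ T.obj₃ // IsIso (𝟙 T.obj₃ + T.mor₃ ≫ s)} =
      Nat.card {s : T.obj₁⟦(1 : ℤ)⟧ ⟶ T.obj₃ // IsIso (𝟙 (T.obj₁⟦(1 : ℤ)⟧) + s ≫ T.mor₃)} :=
    Nat.card_congr (Equiv.subtypeEquivRight fun s => isIso_id_add_comp_iff T.mor₃ s)
  refine Nat.eq_of_mul_eq_mul_right
    (Nat.pos_of_ne_zero (card_hom_ne_zero (T.obj₁⟦(1 : ℤ)⟧) T.obj₃)) ?_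
  rw [mul_right_comm, card_aut_obj₃_mul_card_hom hT, hiso,
    mul_right_comm (Nat.card {a : Aut T.obj₁ // _}), card_aut_obj₁_mul_card_hom hT, mul_right_comm]

end Stabilizers

section TrianglePairs

variable {C : Type u} [Category.{v} C] [Preadditive C] [HasZeroObject C] [HasShift C ℤ]
  [∀ i : ℤ, (shiftFunctor C i).Additive] [Pretriangulated C] {A B D : C}

/-- A pair of composable morphisms is a triangle pair if it extends to a distinguished triangle.
The connecting morphism is not recorded: different triangle pairs are to be counted, rather than
different distinguished triangles. -/
def IsTrianglePair (f : A ⟶ B) (g : B ⟶ D) : Prop :=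
  ∃ d : D ⟶ A⟦(1 : ℤ)⟧, Triangle.mk f g d ∈ distTriang C

lemma IsTrianglePair.of_iso {A' B' D' : C} {f : A ⟶ B} {g : B ⟶ D} (h : IsTrianglePair f g)
    {f' : A' ⟶ B'} {g' : B' ⟶ D'} (a : A' ≅ A) (b : B' ≅ B) (c : D' ≅ D)
    (hf : f' ≫ b.hom = a.hom ≫ f) (hg : g' ≫ c.hom = b.hom ≫ g) : IsTrianglePair f' g' := by
  obtain ⟨d, hd⟩ := h
  refine ⟨c.hom ≫ d ≫ a.inv⟦(1 : ℤ)⟧', isomorphic_distinguished _ hd _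
    (Triangle.isoMk (Triangle.mk f' g' _) (Triangle.mk f g d) a b c hf hg ?_)⟩
  change (c.hom ≫ d ≫ a.inv⟦(1 : ℤ)⟧') ≫ a.hom⟦(1 : ℤ)⟧' = c.hom ≫ d
  rw [Category.assoc, Category.assoc, ← Functor.map_comp, Iso.inv_hom_id,
    CategoryTheory.Functor.map_id, Category.comp_id]

lemma IsTrianglePair.right_iff {f : A ⟶ B} {g g' : B ⟶ D} (h : IsTrianglePair f g) :
    IsTrianglePair f g' ↔ ∃ a : Aut D, g ≫ a.hom = g' := by
  constructor
  · rintro ⟨d', hd'⟩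
    obtain ⟨d, hd⟩ := h
    let e : Triangle.mk f g d ≅ Triangle.mk f g' d' :=
      isoTriangleOfIso₁₂ _ _ hd hd' (Iso.refl A) (Iso.refl B)
        ((Category.comp_id f).trans (Category.id_comp f).symm)
    exact ⟨Triangle.π₃.mapIso e, e.hom.comm₂.trans (Category.id_comp g')⟩
  · rintro ⟨a : D ≅ D, rfl⟩
    exact h.of_iso (Iso.refl A) (Iso.refl B) a.symm (by simp) (by simp)

lemma IsTrianglePair.left_iff {f f' : A ⟶ B} {g : B ⟶ D} (h : IsTrianglePair f g) :
    IsTrianglePair f' g ↔ ∃ a : Aut A, a.hom ≫ f = f' := by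
  constructor
  · rintro ⟨d', hd'⟩
    obtain ⟨d, hd⟩ := h
    have hg : g ≫ 𝟙 D = 𝟙 B ≫ g := (Category.comp_id g).trans (Category.id_comp g).symm
    obtain ⟨a, ha, ha'⟩ : ∃ a : A ⟶ A, f' ≫ 𝟙 B = a ≫ f ∧ d' ≫ a⟦(1 : ℤ)⟧' = 𝟙 D ≫ d :=
      complete_distinguished_triangle_morphism₁ _ _ hd' hd (𝟙 B) (𝟙 D) hg
    have : IsIso a := isIso₁_of_isIso₂₃
      (Triangle.homMk (Triangle.mk f' g d') (Triangle.mk f g d) a (𝟙 B) (𝟙 D) ha hg ha') hd' hd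
      (IsIso.id B) (IsIso.id D)
    exact ⟨asIso a, ha.symm.trans (Category.comp_id f')⟩
  · rintro ⟨a, rfl⟩
    exact h.of_iso a (Iso.refl B) (Iso.refl D) (by simp) (by simp)

lemma isTrianglePair_inl_snd [HasBinaryBiproducts C] (A B : C) :
    IsTrianglePair (biprod.inl : A ⟶ A ⊞ B) biprod.snd :=
  ⟨0, binaryBiproductTriangle_distinguished A B⟩

lemma isTrianglePair_inr_fst [HasBinaryBiproducts C] (A B : C) :
    IsTrianglePair (biprod.inr : B ⟶ A ⊞ B) biprod.fst :=
  (isTrianglePair_inl_snd B A).of_iso (Iso.refl B) (biprod.braiding A B) (Iso.refl A)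
    (by ext <;> simp) (by simp)

lemma coneIs_neg_iff {f : A ⟶ B} : ConeIs (-f) D ↔ ConeIs f D := by
  have coneIs_neg : ∀ {f : A ⟶ B}, ConeIs f D → ConeIs (-f) D := fun {f} ⟨g, h⟩ =>
    ⟨-g, IsTrianglePair.of_iso h (Iso.refl A) ⟨-𝟙 B, -𝟙 B, by simp, by simp⟩ (Iso.refl D)
      (by simp) (by simp)⟩
  exact ⟨fun h => neg_neg f ▸ coneIs_neg h, coneIs_neg⟩

lemma coneIs_shift_iff {g : B ⟶ D} :
    ConeIs g (A⟦(1 : ℤ)⟧) ↔ ∃ f : A ⟶ B, IsTrianglePair f g := by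
  constructor
  · rintro ⟨d, w, h⟩
    obtain ⟨f, rfl⟩ := (shiftFunctor C (1 : ℤ)).map_surjective w
    refine ⟨-f, d, (rotate_distinguished_triangle _).2 ?_⟩
    change Triangle.mk g d (-(-f)⟦(1 : ℤ)⟧') ∈ distTriang C
    rwa [Functor.map_neg, neg_neg]
  · rintro ⟨f, d, h⟩
    exact ⟨d, -f⟦(1 : ℤ)⟧', rot_of_distTriang _ h⟩

variable [IsTriangulated C] {A' D' W : C}

lemma IsTrianglePair.coneIs_comp {f : A ⟶ B} {g : B ⟶ D} {f' : A' ⟶ B} {g' : B ⟶ D'}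
    (h : IsTrianglePair f g) (h' : IsTrianglePair f' g') (hW : ConeIs (f ≫ g') W) :
    ConeIs (f' ≫ g) W := by
  obtain ⟨d, hd⟩ := h
  obtain ⟨d', hd'⟩ := h'
  obtain ⟨v, w, hvw⟩ := hW
  let o := Triangulated.someOctahedron rfl hd (rot_of_distTriang _ hd') hvw
  refine ⟨o.m₁, o.m₃, (rotate_distinguished_triangle _).2 ?_⟩
  change Triangle.mk o.m₁ o.m₃ (-(f' ≫ g)⟦(1 : ℤ)⟧') ∈ distTriang C
  rw [Functor.map_comp, ← Preadditive.neg_comp]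
  exact o.mem

lemma IsTrianglePair.coneIs_comp_iff {f : A ⟶ B} {g : B ⟶ D} {f' : A' ⟶ B} {g' : B ⟶ D'}
    (h : IsTrianglePair f g) (h' : IsTrianglePair f' g') :
    ConeIs (f ≫ g') W ↔ ConeIs (f' ≫ g) W :=
  ⟨h.coneIs_comp h', h'.coneIs_comp h⟩

end TrianglePairs

section WeightedCount

open Preadditive

variable {C : Type u} [Category.{v} C] [Preadditive C] [HasZeroObject C] [HasShift C ℤ]
  [∀ i : ℤ, (shiftFunctor C i).Additive] [Pretriangulated C] {L' N L : C}

lemma IsTrianglePair.card_right_mul_card_stabilizer {l' : L' ⟶ N} {l : N ⟶ L}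
    (h : IsTrianglePair l' l) :
    Nat.card {m : N ⟶ L // IsTrianglePair l' m} * Nat.card {a : Aut L // l ≫ a.hom = l} =
      Nat.card (Aut L) :=
  (congrArg (· * _) (Nat.card_congr (Equiv.subtypeEquivRight fun _ => h.right_iff))).trans
    (card_comp_aut_mul_card_comp_aut_eq_self l)

lemma IsTrianglePair.card_left_mul_card_stabilizer {l' : L' ⟶ N} {l : N ⟶ L}
    (h : IsTrianglePair l' l) :
    Nat.card {m : L' ⟶ N // IsTrianglePair m l} * Nat.card {a : Aut L' // a.hom ≫ l' = l'} =
      Nat.card (Aut L') :=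
  (congrArg (· * _) (Nat.card_congr (Equiv.subtypeEquivRight fun _ => h.left_iff))).trans
    (card_aut_comp_mul_card_aut_comp_eq_self l')

lemma card_right_mul_eq_card_left_mul [Finite (L'⟦(1 : ℤ)⟧ ⟶ L)] {l' : L' ⟶ N} {l : N ⟶ L}
    {d : L ⟶ L'⟦(1 : ℤ)⟧} (h : Triangle.mk l' l d ∈ distTriang C) :
    (Nat.card {m : N ⟶ L // IsTrianglePair l' m} * Nat.card (Aut L')) *
        Nat.card (leftComp L d).range =
      (Nat.card {m : L' ⟶ N // IsTrianglePair m l} * Nat.card (Aut L)) *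
        Nat.card (rightComp (L'⟦(1 : ℤ)⟧) d).range := by
  have : Finite ((Triangle.mk l' l d).obj₁⟦(1 : ℤ)⟧ ⟶ (Triangle.mk l' l d).obj₃) :=
    inferInstanceAs (Finite (L'⟦(1 : ℤ)⟧ ⟶ L))
  have hstab : Nat.card {a : Aut L // l ≫ a.hom = l} *
        Nat.card (rightComp (L'⟦(1 : ℤ)⟧) d).range =
      Nat.card {a : Aut L' // a.hom ≫ l' = l'} * Nat.card (leftComp L d).range :=
    card_aut_obj₃_mul_card_range_rightComp h
  rw [← IsTrianglePair.card_left_mul_card_stabilizer ⟨d, h⟩,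
    ← IsTrianglePair.card_right_mul_card_stabilizer ⟨d, h⟩,
    mul_assoc, mul_assoc, mul_assoc, mul_assoc, ← hstab]
  ac_rfl

variable [∀ X Y : C, Finite (X ⟶ Y)]

lemma card_right_div_eq_card_left_div (hLL : LeftHomologicallyFinite L L)
    (hL'L : LeftHomologicallyFinite L' L) (hL'L' : LeftHomologicallyFinite L' L')
    {l' : L' ⟶ N} {l : N ⟶ L} (h : IsTrianglePair l' l) :
    homAlternatingProd N L / (homAlternatingProd L' L * homAlternatingProd L L) /
        Nat.card (Aut L) * Nat.card {m : N ⟶ L // IsTrianglePair l' m} =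
      homAlternatingProd L' N / (homAlternatingProd L' L * homAlternatingProd L' L') /
        Nat.card (Aut L') * Nat.card {m : L' ⟶ N // IsTrianglePair m l} := by
  obtain ⟨d, hd⟩ := h
  have hleft : homAlternatingProd L L * homAlternatingProd L' L * Nat.card (leftComp L d).range =
      homAlternatingProd N L := homAlternatingProd_obj₃_mul_obj₁ hd hLL hL'L
  have hright : homAlternatingProd L' L' * homAlternatingProd L' L *
      Nat.card (rightComp (L'⟦(1 : ℤ)⟧) d).range = homAlternatingProd L' N :=
    homAlternatingProd_obj₁_mul_obj₃ hd hL'L' hL'L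
  have hcount := congrArg (Nat.cast : ℕ → ℚ) (card_right_mul_eq_card_left_mul hd)
  push_cast at hcount
  have := homAlternatingProd_ne_zero hLL
  have := homAlternatingProd_ne_zero hL'L
  have := homAlternatingProd_ne_zero hL'L'
  have : (Nat.card (Aut L) : ℚ) ≠ 0 := Nat.cast_ne_zero.2 (card_aut_ne_zero L)
  have : (Nat.card (Aut L') : ℚ) ≠ 0 := Nat.cast_ne_zero.2 (card_aut_ne_zero L')
  rw [← hleft, ← hright]
  field_simp
  linear_combination hcount

lemma card_div_card_aut_mul_eq (hLL : LeftHomologicallyFinite L L)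
    (hL'L : LeftHomologicallyFinite L' L) (hL'L' : LeftHomologicallyFinite L' L')
    {P : (N ⟶ L) → Prop} {Q : (L' ⟶ N) → Prop}
    (hPQ : ∀ l' l, IsTrianglePair l' l → (P l ↔ Q l')) :
    (Nat.card {l // P l ∧ ∃ l' : L' ⟶ N, IsTrianglePair l' l} : ℚ) / Nat.card (Aut L) *
        (homAlternatingProd N L / (homAlternatingProd L' L * homAlternatingProd L L)) =
      (Nat.card {l' // Q l' ∧ ∃ l : N ⟶ L, IsTrianglePair l' l} : ℚ) / Nat.card (Aut L') *
        (homAlternatingProd L' N / (homAlternatingProd L' L * homAlternatingProd L' L')) := by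
  have hQ : ∀ l' : L' ⟶ N, (∃ l, P l ∧ IsTrianglePair l' l) ↔
      Q l' ∧ ∃ l : N ⟶ L, IsTrianglePair l' l := fun l' =>
    ⟨fun ⟨l, hl, h⟩ => ⟨(hPQ l' l h).1 hl, l, h⟩, fun ⟨hl', l, h⟩ => ⟨l, (hPQ l' l h).2 hl', h⟩⟩
  have hcard := mul_card_exists_eq_mul_card_exists
    (fun (l : N ⟶ L) (l' : L' ⟶ N) => P l ∧ IsTrianglePair l' l)
    (homAlternatingProd N L / (homAlternatingProd L' L * homAlternatingProd L L) /
      Nat.card (Aut L))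
    (homAlternatingProd L' N / (homAlternatingProd L' L * homAlternatingProd L' L') /
      Nat.card (Aut L'))
    (by
      rintro l l' ⟨hP, h⟩
      have hright : ∀ m, (P m ∧ IsTrianglePair l' m) ↔ IsTrianglePair l' m := fun m =>
        and_iff_right_of_imp fun hm => (hPQ l' m hm).2 ((hPQ l' l h).1 hP)
      simp only [hright, hP, true_and]
      exact card_right_div_eq_card_left_div hLL hL'L hL'L' h)
  simp only [exists_and_left, hQ] at hcard
  linear_combination hcard

end WeightedCount

section Biproduct

variable {C : Type u} [Category.{v} C] [Preadditive C] [HasBinaryBiproducts C]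

lemma card_subtype_biprod_desc {M X L : C} (P : (M ⊞ X ⟶ L) → Prop) :
    Nat.card {p : (M ⟶ L) × (X ⟶ L) // P (biprod.desc p.1 p.2)} = Nat.card {l // P l} :=
  Nat.card_congr (Equiv.subtypeEquivOfSubtype
    { toFun := fun p => biprod.desc p.1 p.2
      invFun := fun l => (biprod.inl ≫ l, biprod.inr ≫ l)
      left_inv := fun p => by simp
      right_inv := fun l => by ext <;> simp })

lemma card_subtype_biprod_lift_neg {M X L' : C} (Q : (L' ⟶ M ⊞ X) → Prop) :
    Nat.card {p : (L' ⟶ M) × (L' ⟶ X) // Q (biprod.lift p.1 (-p.2))} = Nat.card {l' // Q l'} :=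
  Nat.card_congr (Equiv.subtypeEquivOfSubtype
    { toFun := fun p => biprod.lift p.1 (-p.2)
      invFun := fun l' => (l' ≫ biprod.fst, -(l' ≫ biprod.snd))
      left_inv := fun p => by simp
      right_inv := fun l' => by ext <;> simp })

end Biproduct

end TriangulatedHall

open TriangulatedHall in
theorem stmt10_general {C : Type u} [Category.{v} C] [Preadditive C]
    [HasZeroObject C] [HasBinaryBiproducts C] [HasShift C ℤ]
    [∀ i : ℤ, (shiftFunctor C i).Additive] [Pretriangulated C] [IsTriangulated C]
    [∀ X Y : C, Finite (X ⟶ Y)] (X Y Z M L L' : C) (hLL : LeftHomologicallyFinite L L)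
    (hL'L : LeftHomologicallyFinite L' L) (hL'L' : LeftHomologicallyFinite L' L') :
    (Nat.card {p : (M ⟶ L) × (X ⟶ L) // ConeIs p.2 Y ∧ ConeIs p.1 (Z⟦(1 : ℤ)⟧) ∧
        ConeIs (biprod.desc p.1 p.2) (L'⟦(1 : ℤ)⟧)} : ℚ) / Nat.card (Aut L) *
        (homAlternatingProd (M ⊞ X) L /
          (homAlternatingProd L' L * homAlternatingProd L L)) =
      (Nat.card {p : (L' ⟶ M) × (L' ⟶ X) // ConeIs p.1 Y ∧ ConeIs p.2 (Z⟦(1 : ℤ)⟧) ∧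
        ConeIs (biprod.lift p.1 (-p.2)) L} : ℚ) / Nat.card (Aut L') *
        (homAlternatingProd L' (M ⊞ X) /
          (homAlternatingProd L' L * homAlternatingProd L' L')) := by
  let P (l : M ⊞ X ⟶ L) := ConeIs (biprod.inr ≫ l) Y ∧ ConeIs (biprod.inl ≫ l) (Z⟦(1 : ℤ)⟧)
  let Q (l' : L' ⟶ M ⊞ X) := ConeIs (l' ≫ biprod.fst) Y ∧ ConeIs (l' ≫ biprod.snd) (Z⟦(1 : ℤ)⟧)
  have hPQ : ∀ l' l, IsTrianglePair l' l → (P l ↔ Q l') := fun l' l h =>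
    and_congr (h.coneIs_comp_iff (isTrianglePair_inr_fst M X)).symm
      (h.coneIs_comp_iff (isTrianglePair_inl_snd M X)).symm
  convert card_div_card_aut_mul_eq hLL hL'L hL'L' hPQ using 4
  · rw [← card_subtype_biprod_desc]
    simp only [P, biprod.inl_desc, biprod.inr_desc, coneIs_shift_iff, and_assoc]
  · rw [← card_subtype_biprod_lift_neg]
    simp only [Q, biprod.lift_fst, biprod.lift_snd, coneIs_neg_iff, and_assoc]
    -- `ConeIs l' L` unfolds to `∃ l, IsTrianglePair l' l`.
    rfl

theorem stmt10 {k : Type*} [Field k] [Finite k]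
    {C : Type u} [CategoryTheory.Category.{v} C] [Preadditive C] [CategoryTheory.Linear k C]
    [HasZeroObject C] [HasBinaryBiproducts C] [HasShift C ℤ]
    [∀ i : ℤ, (CategoryTheory.shiftFunctor C i).Additive] [Pretriangulated C]
    [IsTriangulated C]
    [∀ X Y : C, FiniteDimensional k (X ⟶ Y)]
    (hloc : ∀ X : C, Indecomposable X → IsLocalRing (CategoryTheory.End X))
    (hhfin : ∀ X Y : C, ∃ N : ℕ, ∀ i ≥ N, ∀ f : X⟦(i : ℤ)⟧ ⟶ Y, f = 0)
    (X Y Z M L L' : C) :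
    (Nat.card {p : (M ⟶ L) × (X ⟶ L) // ConeIs p.2 Y ∧ ConeIs p.1 (Z⟦(1 : ℤ)⟧) ∧
        ConeIs (biprod.desc p.1 p.2) (L'⟦(1 : ℤ)⟧)} : ℚ) / Nat.card (Aut L) *
        (homAlternatingProd (M ⊞ X) L /
          (homAlternatingProd L' L * homAlternatingProd L L)) =
      (Nat.card {p : (L' ⟶ M) × (L' ⟶ X) // ConeIs p.1 Y ∧ ConeIs p.2 (Z⟦(1 : ℤ)⟧) ∧
        ConeIs (biprod.lift p.1 (-p.2)) L} : ℚ) / Nat.card (Aut L') *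
        (homAlternatingProd L' (M ⊞ X) /
          (homAlternatingProd L' L * homAlternatingProd L' L')) := by
  have : ∀ X Y : C, Finite (X ⟶ Y) := fun X Y => Module.finite_of_finite k
  exact stmt10_general X Y Z M L L' (hhfin L L) (hhfin L' L) (hhfin L' L')
end

section
/- (Associativity of the derived Hall algebra.) Assume in addition that C is triangulated (the octahedral axiom holds). For objects X, Y and an object L of C define the derived Hall number F_{XY}^L := |Hom(X,L)_Y| · {X,L} / ( |Aut(X)| · {X,X} ) in Q (this depends only on the isomorphism classes of X, Y, L). Then for all objects X, Y, Z, M of C: sum over isomorphism classes [L] of F_{XY}^L · F_{ZL}^M = sum over isomorphism classes [L'] of F_{ZX}^{L'} · F_{L'Y}^M, where both sums have only finitely many nonzero terms. Consequently, the Q-vector space with basis the isomorphism classes of objects of C, equipped with the multiplication u_[X] * u_[Y] = sum_{[L]} F_{XY}^L u_[L], is an associative algebra with unit u_[0]. -/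
open CategoryTheory CategoryTheory.Limits CategoryTheory.Pretriangulated ZeroObject

universe v u

/-- The derived Hall number `F_{XY}^L := |Hom(X,L)_Y| · {X,L} / (|Aut X| · {X,X})`. -/
noncomputable def hallNumber {C : Type u} [CategoryTheory.Category.{v} C] [Preadditive C]
    [HasZeroObject C] [HasShift C ℤ] [∀ i : ℤ, (CategoryTheory.shiftFunctor C i).Additive]
    [Pretriangulated C] (X Y L : C) : ℚ :=
  (Nat.card {f : X ⟶ L // ConeIs f Y} : ℚ) * homAlternatingProd X L /
    (Nat.card (Aut X) * homAlternatingProd X X)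

/-!
Count the distinguished triangles `X ⟶ L ⟶ Y ⟶ X[1]` by their first and by their third morphism.
The triangles with a given first (third) morphism form an orbit of `Aut Y` (of `Aut L`), and the
stabilisers are `1 + n` with `n` square-zero, whose numbers the long exact sequences compare. This
rewrites `F_{XY}^L` in terms of the number of `Y ⟶ X[1]` with fibre `L`.

Both sides of associativity thereby become sums over pairs `α : Y ⟶ X[1]`, `γ : X ⟶ Z[1]`. With
`L` the fibre of `α` and `L'` that of `γ`, the summand on the left counts the extensions of `γ` to
`L ⟶ Z[1]` with fibre `M`, the one on the right the lifts of `α` to `Y ⟶ L'[1]` with fibre `M`.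
By the octahedral axiom an extension and a lift fit into a homotopy cartesian square; parallel
sides of such a square have the same cone, and translating by `Y ⟶ Z[1]` moves both at once. So
the two numbers agree up to the sizes of the kernels of the translation actions.
-/
namespace DerivedHall

section Counting

theorem card_subtype_comp {G H : Type*} [AddCommGroup G] [AddCommGroup H] (φ : G →+ H)
    {p : H → Prop} (hp : ∀ y, p y → y ∈ φ.range) :
    Nat.card {x // p (φ x)} = Nat.card {y // p y} * Nat.card φ.ker := by
  have fiber (y : {y // p y}) : {x // φ x = y} ≃ φ.ker :=
    (Equiv.setCongr (congrArg (fun z => φ ⁻¹' {z}) (hp y y.2).choose_spec.symm)).trans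
      (φ.fiberEquivKer _)
  rw [← Nat.card_prod, ← Nat.card_congr (Equiv.sigmaSubtypeFiberEquivSubtype φ fun _ => Iff.rfl)]
  exact Nat.card_congr (Equiv.sigmaEquivProdOfEquiv fiber)

theorem card_range_mul_card_ker {G H : Type*} [AddCommGroup G] [AddCommGroup H] (φ : G →+ H) :
    Nat.card φ.range * Nat.card φ.ker = Nat.card G := by
  rw [← Nat.card_congr (Equiv.subtypeUnivEquiv (p := fun x => φ x ∈ φ.range) fun x => ⟨x, rfl⟩)]
  exact (card_subtype_comp φ fun _ h => h).symm

theorem card_fiber_mul_card_ker {G H K : Type*} [AddCommGroup G] [AddCommGroup H]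
    [AddCommGroup K] {φ : G →+ H} {ψ : H →+ K} (hφψ : φ.range = ψ.ker) (p : H → Prop) (y₀ : H) :
    Nat.card {y // ψ y = ψ y₀ ∧ p y} * Nat.card φ.ker = Nat.card {x // p (y₀ + φ x)} := by
  have translate : Nat.card {y // y ∈ φ.range ∧ p (y₀ + y)} =
      Nat.card {y // ψ y = ψ y₀ ∧ p y} :=
    Nat.card_congr ((Equiv.addLeft y₀).subtypeEquiv fun y => by
      simp [hφψ, AddMonoidHom.mem_ker])
  rw [← translate, ← card_subtype_comp φ fun y hy => hy.1]
  exact Nat.card_congr (Equiv.subtypeEquivRight fun x => and_iff_right ⟨x, rfl⟩)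

theorem card_subtype_eq_sum_card_fiber {A B : Type*} [Finite A] [Fintype B] (p : A → Prop)
    (f : A → B) : Nat.card {a // p a} = ∑ b, Nat.card {a // f a = b ∧ p a} := by
  rw [← Nat.card_congr (Equiv.sigmaFiberEquiv fun a : {a // p a} => f a), Nat.card_sigma]
  exact Finset.sum_congr rfl fun b _ => Nat.card_congr <|
    (Equiv.subtypeSubtypeEquivSubtypeInter p (f · = b)).trans <|
      Equiv.subtypeEquivRight fun _ => and_comm

theorem finsum_card_fiber_mul {A B R : Type*} [Fintype A] [Semiring R] (f : A → B) (w : B → R) :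
    ∑ᶠ b, (Nat.card {a // f a = b} : R) * w b = ∑ a, w (f a) := by
  classical
  have card_fiber (b : B) : Nat.card {a // f a = b} = (Finset.univ.filter (f · = b)).card := by
    rw [Nat.card_eq_fintype_card, Fintype.card_subtype]
  rw [Finset.sum_comp, finsum_eq_sum_of_support_subset (s := Finset.univ.image f)]
  · simp only [card_fiber, nsmul_eq_mul]
  · intro b hb
    have : Nat.card {a // f a = b} ≠ 0 := fun h => hb (by simp only [h, Nat.cast_zero, zero_mul])
    obtain ⟨⟨a, ha⟩⟩ := (Nat.card_ne_zero.1 this).1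
    simp [← ha]

theorem card_sigma_stabilizer {G T S : Type*} [Group G] [MulAction G T] (π : T → S)
    (hπ : ∀ t t', π t = π t' ↔ t ∈ MulAction.orbit G t') :
    Nat.card (Σ t : T, MulAction.stabilizer G t) = Nat.card (Set.range π) * Nat.card G := by
  have orbits : MulAction.orbitRel G T = Setoid.ker π :=
    Setoid.ext fun t t' => (hπ t t').symm
  rw [← Nat.card_congr (Setoid.quotientKerEquivRange π), ← orbits, ← Nat.card_prod,
    ← Nat.card_congr (MulAction.sigmaFixedByEquivOrbitsProdGroup G T)]
  exact Nat.card_congr <|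
    (Equiv.subtypeProdEquivSigmaSubtype fun (t : T) (g : G) => g • t = t).symm.trans <|
      ((Equiv.prodComm T G).subtypeEquiv fun _ => Iff.rfl).trans <|
        Equiv.subtypeProdEquivSigmaSubtype fun (g : G) (t : T) => g • t = t

end Counting

section HomAlternatingProd

variable {C : Type u} [Category.{v} C] [HasShift C ℤ]

/-- `Hom(A[i], W)` is trivial for all `i ≥ N`. -/
def HomVanishesFrom (N : ℕ) (A W : C) : Prop := ∀ i ≥ N, Subsingleton (A⟦(i : ℤ)⟧ ⟶ W)

theorem HomVanishesFrom.mono {N N' : ℕ} {A W : C} (h : HomVanishesFrom N A W) (hN : N ≤ N') :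
    HomVanishesFrom N' A W :=
  fun i hi => h i (hN.trans hi)

theorem HomVanishesFrom.shift {N : ℕ} {A W : C} (h : HomVanishesFrom (N + 1) A W) :
    HomVanishesFrom N (A⟦(1 : ℤ)⟧) W := fun i hi =>
  have := h (i + 1) (Nat.succ_le_succ hi)
  ((shiftFunctorAdd' C 1 (i : ℤ) (i + 1 : ℕ) (by omega)).symm.app A).homFromEquiv.subsingleton

theorem HomVanishesFrom.subsingleton {A W : C} (h : HomVanishesFrom 0 A W) :
    Subsingleton (A ⟶ W) :=
  have := h 0 le_rfl
  ((shiftFunctorZero' C ((0 : ℕ) : ℤ) Nat.cast_zero).symm.app A).homFromEquiv.subsingleton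

variable (C) in
/-- Left local homological finiteness of a category with shift: `Hom(A[i], W)` is trivial for
all large `i`, with a bound depending on `A` and `W`. -/
class LeftLocallyHomologicallyFinite : Prop where
  exists_homVanishesFrom (A W : C) : ∃ N, HomVanishesFrom N A W

theorem exists_homVanishesFrom₃ [LeftLocallyHomologicallyFinite C] (P Q R : C × C) :
    ∃ N, HomVanishesFrom N P.1 P.2 ∧ HomVanishesFrom N Q.1 Q.2 ∧ HomVanishesFrom N R.1 R.2 := by
  choose N hN using fun P : C × C =>
    LeftLocallyHomologicallyFinite.exists_homVanishesFrom P.1 P.2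
  exact ⟨max (N P) (max (N Q) (N R)), (hN P).mono (by simp), (hN Q).mono (by simp),
    (hN R).mono (by simp)⟩

theorem homAlternatingProd_congr {A A' W W' : C} (e : A ≅ A') (e' : W ≅ W') :
    homAlternatingProd A W = homAlternatingProd A' W' :=
  tprod_congr fun i => by
    rw [Nat.card_congr (((shiftFunctor C ((i : ℤ) + 1)).mapIso e).homCongr e')]

variable [HasZeroMorphisms C]

theorem homAlternatingProd_eq_prod {N : ℕ} {A W : C} (h : HomVanishesFrom (N + 1) A W) :
    homAlternatingProd A W =
      ∏ i ∈ Finset.range N, (Nat.card (A⟦(i : ℤ) + 1⟧ ⟶ W) : ℚ) ^ ((-1 : ℤ) ^ (i + 1)) :=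
  tprod_eq_prod fun i hi => by
    have : Subsingleton (A⟦(i : ℤ) + 1⟧ ⟶ W) := by exact_mod_cast h (i + 1) (by simpa using hi)
    simp

theorem homAlternatingProd_eq_one {A W : C} (h : HomVanishesFrom 0 A W) :
    homAlternatingProd A W = 1 := by
  simp [homAlternatingProd_eq_prod (h.mono zero_le_one)]

theorem homAlternatingProd_eq_inv {N : ℕ} {A W : C} (h : HomVanishesFrom (N + 1) A W) :
    homAlternatingProd A W =
      (Nat.card (A⟦(1 : ℤ)⟧ ⟶ W) * homAlternatingProd (A⟦(1 : ℤ)⟧) W)⁻¹ := by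
  have card_shift (i : ℕ) : Nat.card (A⟦(1 : ℤ)⟧⟦(i : ℤ) + 1⟧ ⟶ W) =
      Nat.card (A⟦((i + 1 : ℕ) : ℤ) + 1⟧ ⟶ W) :=
    Nat.card_congr
      ((shiftFunctorAdd' C 1 ((i : ℤ) + 1) _ (by push_cast; ring)).symm.app A).homFromEquiv
  have h' : HomVanishesFrom (N + 2) A W := h.mono (Nat.le_succ _)
  rw [homAlternatingProd_eq_prod h', homAlternatingProd_eq_prod h'.shift,
    Finset.prod_range_succ', mul_inv_rev, ← Finset.prod_inv_distrib]
  congr 1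
  · refine Finset.prod_congr rfl fun i _ => ?_
    rw [card_shift, ← zpow_neg, pow_succ _ (i + 1), mul_neg_one]
  · simp

theorem homAlternatingProd_ne_zero [∀ X Y : C, Finite (X ⟶ Y)]
    [LeftLocallyHomologicallyFinite C] (A W : C) : homAlternatingProd A W ≠ 0 := by
  obtain ⟨N, h⟩ := LeftLocallyHomologicallyFinite.exists_homVanishesFrom A W
  rw [homAlternatingProd_eq_prod (h.mono N.le_succ)]
  exact Finset.prod_ne_zero_iff.2 fun i _ => zpow_ne_zero _ (Nat.cast_ne_zero.2 Nat.card_pos.ne')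

end HomAlternatingProd

section AutWeight

variable {C : Type u} [Category.{v} C]

instance [∀ X Y : C, Finite (X ⟶ Y)] (X : C) : Finite (Aut X) :=
  Finite.of_injective (fun a : X ≅ X => a.hom) fun _ _ h => Iso.ext h

variable [HasShift C ℤ]

/-- The weighted order `|Aut X| · {X, X}` of the automorphism group of `X`, by which Hall numbers
are normalised. -/
noncomputable def autWeight (X : C) : ℚ :=
  Nat.card (Aut X) * homAlternatingProd X X

theorem autWeight_congr {X X' : C} (e : X ≅ X') : autWeight X = autWeight X' := by
  rw [autWeight, autWeight, homAlternatingProd_congr e e, Nat.card_congr e.conjAut.toEquiv]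

theorem autWeight_ne_zero [HasZeroMorphisms C] [∀ X Y : C, Finite (X ⟶ Y)]
    [LeftLocallyHomologicallyFinite C] (X : C) : autWeight X ≠ 0 :=
  mul_ne_zero (Nat.cast_ne_zero.2 Nat.card_pos.ne') (homAlternatingProd_ne_zero X X)

end AutWeight

section LongExactSequence

variable {C : Type u} [Category.{v} C] [Preadditive C]

open Preadditive

theorem card_ker_ne_zero [∀ X Y : C, Finite (X ⟶ Y)] {X Y Z W : C} (φ : (X ⟶ Y) →+ (Z ⟶ W)) :
    (Nat.card φ.ker : ℚ) ≠ 0 :=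
  Nat.cast_ne_zero.2 Nat.card_pos.ne'

variable [HasShift C ℤ] [∀ i : ℤ, (shiftFunctor C i).Additive]

theorem card_ker_rightComp_neg_shift {X Y : C} (f : X ⟶ Y) (W : C) :
    Nat.card (rightComp (W⟦(1 : ℤ)⟧) (-f⟦(1 : ℤ)⟧')).ker = Nat.card (rightComp W f).ker :=
  Nat.card_congr <| Equiv.symm <|
    (Functor.FullyFaithful.ofFullyFaithful (shiftFunctor C (1 : ℤ))).homEquiv.subtypeEquiv
      fun x => by
        change x ≫ f = 0 ↔ x⟦(1 : ℤ)⟧' ≫ (-f⟦(1 : ℤ)⟧') = 0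
        rw [comp_neg, neg_eq_zero, ← Functor.map_comp, Functor.map_eq_zero_iff]

variable [HasZeroObject C] [Pretriangulated C] {X Y Z : C} {f : X ⟶ Y} {g : Y ⟶ Z}
  {h : Z ⟶ X⟦(1 : ℤ)⟧}

theorem mem_distTriang_iff_rotate :
    Triangle.mk f g h ∈ distTriang C ↔ Triangle.mk g h (-f⟦(1 : ℤ)⟧') ∈ distTriang C :=
  rotate_distinguished_triangle _

theorem rotate_mem_distTriang (H : Triangle.mk f g h ∈ distTriang C) :
    Triangle.mk g h (-f⟦(1 : ℤ)⟧') ∈ distTriang C :=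
  mem_distTriang_iff_rotate.1 H

theorem mem_distTriang_of_iso {X' Y' Z' : C} {f' : X' ⟶ Y'} {g' : Y' ⟶ Z'}
    {h' : Z' ⟶ X'⟦(1 : ℤ)⟧} (H : Triangle.mk f g h ∈ distTriang C) (a : X ≅ X') (b : Y ≅ Y')
    (c : Z ≅ Z') (hf : f ≫ b.hom = a.hom ≫ f') (hg : g ≫ c.hom = b.hom ≫ g')
    (hh : h ≫ a.hom⟦(1 : ℤ)⟧' = c.hom ≫ h') : Triangle.mk f' g' h' ∈ distTriang C :=
  isomorphic_distinguished _ H _ (Triangle.isoMk _ _ a b c hf hg hh).symm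

theorem neg_mem_distTriang (H : Triangle.mk f g h ∈ distTriang C) :
    Triangle.mk (-f) (-g) h ∈ distTriang C :=
  mem_distTriang_of_iso H (Iso.refl X) (-Iso.refl Y) (Iso.refl Z) (by simp) (by simp) (by simp)

theorem rotate_rotate_mem_distTriang (H : Triangle.mk f g h ∈ distTriang C) :
    Triangle.mk h (f⟦(1 : ℤ)⟧') (g⟦(1 : ℤ)⟧') ∈ distTriang C := by
  simpa only [Functor.map_neg, neg_neg] using
    rotate_mem_distTriang (rotate_mem_distTriang (neg_mem_distTriang H))

theorem exists_iso_of_mor₁_eq {Z' : C} {g' : Y ⟶ Z'} {h' : Z' ⟶ X⟦(1 : ℤ)⟧}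
    (H : Triangle.mk f g h ∈ distTriang C) (H' : Triangle.mk f g' h' ∈ distTriang C) :
    ∃ e : Z ≅ Z', g ≫ e.hom = g' ∧ e.hom ≫ h' = h := by
  let e := isoTriangleOfIso₁₂ _ _ H H' (Iso.refl X) (Iso.refl Y)
    ((Category.comp_id f).trans (Category.id_comp f).symm)
  exact ⟨Triangle.π₃.mapIso e, e.hom.comm₂.trans (Category.id_comp g'),
    e.hom.comm₃.symm.trans
      ((congrArg (h ≫ ·) (CategoryTheory.Functor.map_id _ X)).trans (Category.comp_id h))⟩

theorem exists_iso_of_mor₃_eq {Y' : C} {f' : X ⟶ Y'} {g' : Y' ⟶ Z}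
    (H : Triangle.mk f g h ∈ distTriang C) (H' : Triangle.mk f' g' h ∈ distTriang C) :
    ∃ e : Y ≅ Y', f ≫ e.hom = f' ∧ e.hom ≫ g' = g := by
  let e := isoTriangleOfIso₁₃ _ _ H H' (Iso.refl X) (Iso.refl Z)
    ((congrArg (h ≫ ·) (CategoryTheory.Functor.map_id _ X)).trans
      ((Category.comp_id h).trans (Category.id_comp h).symm))
  exact ⟨Triangle.π₂.mapIso e, e.hom.comm₁.trans (Category.id_comp f'),
    e.hom.comm₂.symm.trans (Category.comp_id g)⟩

theorem range_leftComp_eq_ker (H : Triangle.mk f g h ∈ distTriang C) (W : C) :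
    (leftComp W g).range = (leftComp W f).ker := by
  ext x
  constructor
  · rintro ⟨y, rfl⟩
    change f ≫ g ≫ y = 0
    rw [← Category.assoc, show f ≫ g = 0 from comp_distTriang_mor_zero₁₂ _ H, zero_comp]
  · intro hx
    obtain ⟨y, rfl⟩ := Triangle.yoneda_exact₂ _ H x hx
    exact ⟨y, rfl⟩

theorem range_rightComp_eq_ker (H : Triangle.mk f g h ∈ distTriang C) (W : C) :
    (rightComp W f).range = (rightComp W g).ker := by
  ext x
  constructor
  · rintro ⟨y, rfl⟩
    change (y ≫ f) ≫ g = 0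
    rw [Category.assoc, show f ≫ g = 0 from comp_distTriang_mor_zero₁₂ _ H, comp_zero]
  · intro hx
    obtain ⟨y, rfl⟩ := Triangle.coyoneda_exact₂ _ H x hx
    exact ⟨y, rfl⟩

theorem card_ker_leftComp_mul_card_ker (H : Triangle.mk f g h ∈ distTriang C) (W : C) :
    Nat.card (leftComp W f).ker * Nat.card (leftComp W g).ker = Nat.card (Z ⟶ W) := by
  rw [← range_leftComp_eq_ker H, card_range_mul_card_ker]

theorem card_ker_rightComp_mul_card_ker (H : Triangle.mk f g h ∈ distTriang C) (W : C) :
    Nat.card (rightComp W f).ker * Nat.card (rightComp W g).ker = Nat.card (W ⟶ X) := by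
  rw [← range_rightComp_eq_ker H, mul_comm, card_range_mul_card_ker]

variable [∀ X Y : C, Finite (X ⟶ Y)]

theorem card_ker_leftComp_mul_of_homVanishesFrom {W : C} {N : ℕ}
    (H : Triangle.mk f g h ∈ distTriang C) (hX : HomVanishesFrom N X W)
    (hY : HomVanishesFrom N Y W) (hZ : HomVanishesFrom N Z W) :
    (Nat.card (leftComp W g).ker : ℚ) * (homAlternatingProd X W * homAlternatingProd Z W) =
      homAlternatingProd Y W := by
  induction N generalizing X Y Z with
  | zero =>
    have := hZ.subsingleton
    rw [homAlternatingProd_eq_one hX, homAlternatingProd_eq_one hY, homAlternatingProd_eq_one hZ,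
      Nat.card_unique, Nat.cast_one, one_mul, one_mul]
  | succ N ih =>
    have H₁ := rotate_mem_distTriang H
    have H₂ := rotate_mem_distTriang H₁
    have H₃ := rotate_mem_distTriang H₂
    rw [homAlternatingProd_eq_inv hX, homAlternatingProd_eq_inv hY, homAlternatingProd_eq_inv hZ,
      ← ih H₃ hX.shift hY.shift hZ.shift, ← card_ker_leftComp_mul_card_ker H₁,
      ← card_ker_leftComp_mul_card_ker H₂, ← card_ker_leftComp_mul_card_ker H₃]
    have := card_ker_ne_zero (leftComp W g)
    have := card_ker_ne_zero (leftComp W (-g⟦(1 : ℤ)⟧'))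
    push_cast
    field_simp

theorem card_ker_rightComp_mul_of_homVanishesFrom {W : C} {N : ℕ}
    (H : Triangle.mk f g h ∈ distTriang C) (hX : HomVanishesFrom N W X)
    (hY : HomVanishesFrom N W Y) (hZ : HomVanishesFrom N W Z) :
    (Nat.card (rightComp W f).ker : ℚ) * (homAlternatingProd W X * homAlternatingProd W Z) =
      homAlternatingProd W Y := by
  induction N generalizing W with
  | zero =>
    have := hX.subsingleton
    rw [homAlternatingProd_eq_one hX, homAlternatingProd_eq_one hY, homAlternatingProd_eq_one hZ,
      Nat.card_unique, Nat.cast_one, one_mul, one_mul]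
  | succ N ih =>
    have H₁ := rotate_mem_distTriang H
    have H₂ := rotate_mem_distTriang H₁
    rw [homAlternatingProd_eq_inv hX, homAlternatingProd_eq_inv hY, homAlternatingProd_eq_inv hZ,
      ← ih hX.shift hY.shift hZ.shift, ← card_ker_rightComp_mul_card_ker H,
      ← card_ker_rightComp_mul_card_ker H₁, ← card_ker_rightComp_mul_card_ker H₂,
      card_ker_rightComp_neg_shift]
    have := card_ker_ne_zero (rightComp W f)
    have := card_ker_ne_zero (rightComp (W⟦(1 : ℤ)⟧) f)
    push_cast
    field_simp

variable [LeftLocallyHomologicallyFinite C]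

theorem card_ker_leftComp_mul (H : Triangle.mk f g h ∈ distTriang C) (W : C) :
    (Nat.card (leftComp W g).ker : ℚ) * (homAlternatingProd X W * homAlternatingProd Z W) =
      homAlternatingProd Y W := by
  obtain ⟨N, hX, hY, hZ⟩ := exists_homVanishesFrom₃ (X, W) (Y, W) (Z, W)
  exact card_ker_leftComp_mul_of_homVanishesFrom H hX hY hZ

theorem card_ker_rightComp_mul (H : Triangle.mk f g h ∈ distTriang C) (W : C) :
    (Nat.card (rightComp W f).ker : ℚ) * (homAlternatingProd W X * homAlternatingProd W Z) =
      homAlternatingProd W Y := by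
  obtain ⟨N, hX, hY, hZ⟩ := exists_homVanishesFrom₃ (W, X) (W, Y) (W, Z)
  exact card_ker_rightComp_mul_of_homVanishesFrom H hX hY hZ

end LongExactSequence

section Riedtmann

variable {C : Type u} [Category.{v} C] [Preadditive C]

open Preadditive

theorem card_iso_subtype {Y : C} {p : (Y ⟶ Y) → Prop} (hp : ∀ n, p n → n ≫ n = 0) :
    Nat.card {a : Y ≅ Y // p (a.hom - 𝟙 Y)} = Nat.card {n // p n} :=
  Nat.card_congr
    { toFun a := ⟨_, a.2⟩
      invFun n := ⟨⟨𝟙 Y + n, 𝟙 Y - n, by simp [hp n n.2], by simp [hp n n.2]⟩, by simpa using n.2⟩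
      left_inv _ := Subtype.ext (Iso.ext (add_sub_cancel _ _))
      right_inv _ := Subtype.ext (add_sub_cancel_left _ _) }

variable [HasZeroObject C] [HasShift C ℤ] [∀ i : ℤ, (shiftFunctor C i).Additive]
  [Pretriangulated C] {X L Y : C}

/-- `w : Y ⟶ X[1]` has fibre `L`: it is the third morphism of a distinguished triangle
`X ⟶ L ⟶ Y ⟶ X[1]`. This is the counterpart of `ConeIs` for the middle term. -/
def FiberIs (w : Y ⟶ X⟦(1 : ℤ)⟧) (L : C) : Prop :=
  ∃ (f : X ⟶ L) (g : L ⟶ Y), Triangle.mk f g w ∈ distTriang C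

variable (X L Y) in
/-- The distinguished triangles `X ⟶ L ⟶ Y ⟶ X[1]` on three given objects. -/
@[ext]
structure DistTriangle where
  mor₁ : X ⟶ L
  mor₂ : L ⟶ Y
  mor₃ : Y ⟶ X⟦(1 : ℤ)⟧
  mem_distTriang : Triangle.mk mor₁ mor₂ mor₃ ∈ distTriang C

namespace DistTriangle

/-- `Aut Y` acts on the distinguished triangles `X ⟶ L ⟶ Y ⟶ X[1]` by transport of structure. -/
abbrev autObj₃Action : MulAction (Aut Y) (DistTriangle X L Y) where
  smul := fun (a : Y ≅ Y) t => ⟨t.mor₁, t.mor₂ ≫ a.hom, a.inv ≫ t.mor₃,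
    mem_distTriang_of_iso t.mem_distTriang (Iso.refl X) (Iso.refl L) a
      (by simp) (by simp) (by simp)⟩
  one_smul t := DistTriangle.ext rfl (Category.comp_id _) (Category.id_comp _)
  mul_smul a b t := DistTriangle.ext rfl (Category.assoc _ _ _).symm (Category.assoc _ _ _)

/-- `Aut L` acts on the distinguished triangles `X ⟶ L ⟶ Y ⟶ X[1]` by transport of structure. -/
abbrev autObj₂Action : MulAction (Aut L) (DistTriangle X L Y) where
  smul := fun (a : L ≅ L) t => ⟨t.mor₁ ≫ a.hom, a.inv ≫ t.mor₂, t.mor₃,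
    mem_distTriang_of_iso t.mem_distTriang (Iso.refl X) a (Iso.refl Y)
      (by simp) (by simp) (by simp)⟩
  one_smul t := DistTriangle.ext (Category.comp_id _) (Category.id_comp _) rfl
  mul_smul a b t := DistTriangle.ext (Category.assoc _ _ _).symm (Category.assoc _ _ _) rfl

attribute [local instance] autObj₃Action autObj₂Action

theorem mor₁_eq_iff_mem_orbit (t t' : DistTriangle X L Y) :
    t.mor₁ = t'.mor₁ ↔ t ∈ MulAction.orbit (Aut Y) t' := by
  constructor
  · intro ht
    obtain ⟨a, ha₂, ha₃⟩ := exists_iso_of_mor₁_eq (ht ▸ t'.mem_distTriang) t.mem_distTriang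
    exact ⟨a, DistTriangle.ext ht.symm ha₂ ((Iso.inv_comp_eq a).2 ha₃.symm)⟩
  · rintro ⟨a, rfl⟩
    rfl

theorem mor₃_eq_iff_mem_orbit (t t' : DistTriangle X L Y) :
    t.mor₃ = t'.mor₃ ↔ t ∈ MulAction.orbit (Aut L) t' := by
  constructor
  · intro ht
    obtain ⟨a, ha₁, ha₂⟩ := exists_iso_of_mor₃_eq (ht ▸ t'.mem_distTriang) t.mem_distTriang
    exact ⟨a, DistTriangle.ext ha₁ ((Iso.inv_comp_eq a).2 ha₂.symm) ht.symm⟩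
  · rintro ⟨a, rfl⟩
    rfl

theorem card_stabilizer_autObj₃ (t : DistTriangle X L Y) :
    Nat.card (MulAction.stabilizer (Aut Y) t) =
      Nat.card {n : Y ⟶ Y // t.mor₂ ≫ n = 0 ∧ n ≫ t.mor₃ = 0} := by
  have sq_eq_zero (n : Y ⟶ Y) (hn : t.mor₂ ≫ n = 0 ∧ n ≫ t.mor₃ = 0) : n ≫ n = 0 := by
    obtain ⟨y, hy⟩ : ∃ y : X⟦(1 : ℤ)⟧ ⟶ Y, n = t.mor₃ ≫ y :=
      Triangle.yoneda_exact₃ _ t.mem_distTriang n hn.1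
    calc n ≫ n = (n ≫ t.mor₃) ≫ y := by rw [Category.assoc, ← hy]
      _ = 0 := by rw [hn.2, zero_comp]
  rw [← card_iso_subtype sq_eq_zero]
  refine Nat.card_congr (Equiv.subtypeEquivRight fun (a : Y ≅ Y) => ?_)
  calc a ∈ MulAction.stabilizer (Aut Y) t
      ↔ t.mor₂ ≫ a.hom = t.mor₂ ∧ a.inv ≫ t.mor₃ = t.mor₃ :=
        DistTriangle.ext_iff.trans (and_iff_right rfl)
    _ ↔ _ := by
      rw [comp_sub, sub_comp, sub_eq_zero, sub_eq_zero, Category.comp_id, Category.id_comp,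
        Iso.inv_comp_eq, eq_comm (a := t.mor₃)]

theorem card_stabilizer_autObj₂ (t : DistTriangle X L Y) :
    Nat.card (MulAction.stabilizer (Aut L) t) =
      Nat.card {n : L ⟶ L // t.mor₁ ≫ n = 0 ∧ n ≫ t.mor₂ = 0} := by
  have sq_eq_zero (n : L ⟶ L) (hn : t.mor₁ ≫ n = 0 ∧ n ≫ t.mor₂ = 0) : n ≫ n = 0 := by
    obtain ⟨y, hy⟩ : ∃ y : Y ⟶ L, n = t.mor₂ ≫ y :=
      Triangle.yoneda_exact₂ _ t.mem_distTriang n hn.1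
    calc n ≫ n = (n ≫ t.mor₂) ≫ y := by rw [Category.assoc, ← hy]
      _ = 0 := by rw [hn.2, zero_comp]
  rw [← card_iso_subtype sq_eq_zero]
  refine Nat.card_congr (Equiv.subtypeEquivRight fun (a : L ≅ L) => ?_)
  calc a ∈ MulAction.stabilizer (Aut L) t
      ↔ t.mor₁ ≫ a.hom = t.mor₁ ∧ a.inv ≫ t.mor₂ = t.mor₂ :=
        DistTriangle.ext_iff.trans (and_congr_right' (and_iff_left rfl))
    _ ↔ _ := by
      rw [comp_sub, sub_comp, sub_eq_zero, sub_eq_zero, Category.comp_id, Category.id_comp,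
        Iso.inv_comp_eq, eq_comm (a := t.mor₂)]

instance [∀ X Y : C, Finite (X ⟶ Y)] : Finite (DistTriangle X L Y) :=
  Finite.of_injective (fun t => (t.mor₁, t.mor₂, t.mor₃)) fun _ _ h => by
    simpa only [Prod.mk.injEq, ← DistTriangle.ext_iff] using h

variable (X L Y) in
theorem sum_card_stabilizer_autObj₃ [∀ X Y : C, Finite (X ⟶ Y)] [Fintype (DistTriangle X L Y)] :
    ∑ t : DistTriangle X L Y, Nat.card {n : Y ⟶ Y // t.mor₂ ≫ n = 0 ∧ n ≫ t.mor₃ = 0} =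
      Nat.card {f : X ⟶ L // ConeIs f Y} * Nat.card (Aut Y) := by
  have range_mor₁ : Set.range (mor₁ : DistTriangle X L Y → _) = {f | ConeIs f Y} :=
    Set.ext fun f => ⟨by rintro ⟨t, rfl⟩; exact ⟨_, _, t.mem_distTriang⟩,
      fun ⟨_, _, H⟩ => ⟨⟨_, _, _, H⟩, rfl⟩⟩
  simp only [← card_stabilizer_autObj₃]
  rw [← Nat.card_sigma, card_sigma_stabilizer mor₁ mor₁_eq_iff_mem_orbit, range_mor₁]
  rfl

variable (X L Y) in
theorem sum_card_stabilizer_autObj₂ [∀ X Y : C, Finite (X ⟶ Y)] [Fintype (DistTriangle X L Y)] :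
    ∑ t : DistTriangle X L Y, Nat.card {n : L ⟶ L // t.mor₁ ≫ n = 0 ∧ n ≫ t.mor₂ = 0} =
      Nat.card {w : Y ⟶ X⟦(1 : ℤ)⟧ // FiberIs w L} * Nat.card (Aut L) := by
  have range_mor₃ : Set.range (mor₃ : DistTriangle X L Y → _) = {w | FiberIs w L} :=
    Set.ext fun w => ⟨by rintro ⟨t, rfl⟩; exact ⟨_, _, t.mem_distTriang⟩,
      fun ⟨_, _, H⟩ => ⟨⟨_, _, _, H⟩, rfl⟩⟩
  simp only [← card_stabilizer_autObj₂]
  rw [← Nat.card_sigma, card_sigma_stabilizer mor₃ mor₃_eq_iff_mem_orbit, range_mor₃]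
  rfl

theorem card_nilpotent_mul_card_ker (t : DistTriangle X L Y) :
    Nat.card {n : L ⟶ L // t.mor₁ ≫ n = 0 ∧ n ≫ t.mor₂ = 0} *
        Nat.card (leftComp L t.mor₂).ker =
      Nat.card {n : Y ⟶ Y // t.mor₂ ≫ n = 0 ∧ n ≫ t.mor₃ = 0} *
        Nat.card (rightComp Y t.mor₂).ker := by
  have comp₁₂ : t.mor₁ ≫ t.mor₂ = 0 := comp_distTriang_mor_zero₁₂ _ t.mem_distTriang
  have comp₂₃ : t.mor₂ ≫ t.mor₃ = 0 := comp_distTriang_mor_zero₂₃ _ t.mem_distTriang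
  rw [← card_subtype_comp (leftComp L t.mor₂) fun n hn =>
      (range_leftComp_eq_ker t.mem_distTriang L).ge hn.1,
    ← card_subtype_comp (rightComp Y t.mor₂) fun n hn =>
      (range_rightComp_eq_ker (rotate_mem_distTriang t.mem_distTriang) Y).ge hn.2]
  refine Nat.card_congr (Equiv.subtypeEquivRight fun r => ?_)
  change t.mor₁ ≫ t.mor₂ ≫ r = 0 ∧ (t.mor₂ ≫ r) ≫ t.mor₂ = 0 ↔
    t.mor₂ ≫ r ≫ t.mor₂ = 0 ∧ (r ≫ t.mor₂) ≫ t.mor₃ = 0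
  simp [reassoc_of% comp₁₂, comp₂₃]

end DistTriangle

variable [∀ X Y : C, Finite (X ⟶ Y)] [LeftLocallyHomologicallyFinite C]

open DistTriangle

variable (X L Y) in
theorem card_fiberIs_mul :
    (Nat.card {w : Y ⟶ X⟦(1 : ℤ)⟧ // FiberIs w L} : ℚ) * homAlternatingProd Y (X⟦(1 : ℤ)⟧) *
        autWeight L =
      Nat.card {f : X ⟶ L // ConeIs f Y} * homAlternatingProd X L *
        autWeight Y := by
  have := Fintype.ofFinite (DistTriangle X L Y)
  have termwise (t : DistTriangle X L Y) :
      (Nat.card {n : L ⟶ L // t.mor₁ ≫ n = 0 ∧ n ≫ t.mor₂ = 0} : ℚ) *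
          (homAlternatingProd Y (X⟦(1 : ℤ)⟧) * homAlternatingProd L L) =
        Nat.card {n : Y ⟶ Y // t.mor₂ ≫ n = 0 ∧ n ≫ t.mor₃ = 0} *
          (homAlternatingProd X L * homAlternatingProd Y Y) := by
    rw [← card_ker_leftComp_mul t.mem_distTriang L,
      ← card_ker_rightComp_mul (rotate_mem_distTriang t.mem_distTriang) Y]
    have h := congrArg (Nat.cast (R := ℚ)) (card_nilpotent_mul_card_ker t)
    push_cast at h
    linear_combination (homAlternatingProd Y L * homAlternatingProd X L *
      homAlternatingProd Y (X⟦(1 : ℤ)⟧)) * h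
  have total := Finset.sum_congr rfl fun t (_ : t ∈ Finset.univ) => termwise t
  rw [← Finset.sum_mul, ← Finset.sum_mul, ← Nat.cast_sum, ← Nat.cast_sum,
    sum_card_stabilizer_autObj₂, sum_card_stabilizer_autObj₃] at total
  push_cast at total
  rw [autWeight, autWeight]
  linear_combination total

variable (X L Y) in
theorem hallNumber_eq :
    hallNumber X Y L = Nat.card {w : Y ⟶ X⟦(1 : ℤ)⟧ // FiberIs w L} *
      homAlternatingProd Y (X⟦(1 : ℤ)⟧) * autWeight L / (autWeight X * autWeight Y) := by
  rw [hallNumber, ← autWeight, div_eq_div_iff (autWeight_ne_zero X)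
    (mul_ne_zero (autWeight_ne_zero X) (autWeight_ne_zero Y))]
  linear_combination -autWeight X * card_fiberIs_mul X L Y

end Riedtmann

section Cones

variable {C : Type u} [Category.{v} C] [Preadditive C] [HasZeroObject C] [HasShift C ℤ]
  [∀ i : ℤ, (shiftFunctor C i).Additive] [Pretriangulated C] {X Y Z W : C}

theorem coneIs_iff_nonempty_iso {f : X ⟶ Y} {g : Y ⟶ Z} {h : Z ⟶ X⟦(1 : ℤ)⟧}
    (H : Triangle.mk f g h ∈ distTriang C) : ConeIs f W ↔ Nonempty (Z ≅ W) := by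
  constructor
  · rintro ⟨g', h', H'⟩
    obtain ⟨e, -⟩ := exists_iso_of_mor₁_eq H H'
    exact ⟨e⟩
  · rintro ⟨e⟩
    exact ⟨g ≫ e.hom, e.inv ≫ h,
      mem_distTriang_of_iso H (Iso.refl X) (Iso.refl Y) e (by simp) (by simp) (by simp)⟩

theorem coneIs_of_iso {X' Y' Z' : C} {f : X ⟶ Y} {f' : X' ⟶ Y'} (hf : ConeIs f Z) (a : X ≅ X')
    (b : Y ≅ Y') (c : Z ≅ Z') (comm : f ≫ b.hom = a.hom ≫ f') : ConeIs f' Z' := by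
  obtain ⟨g, h, H⟩ := hf
  exact ⟨b.inv ≫ g ≫ c.hom, c.inv ≫ h ≫ a.hom⟦1⟧',
    mem_distTriang_of_iso H a b c comm (by simp) (by simp)⟩

theorem card_coneIs_congr {X' Y' Z' : C} (a : X ≅ X') (b : Y ≅ Y') (c : Z ≅ Z') :
    Nat.card {f : X ⟶ Y // ConeIs f Z} = Nat.card {f : X' ⟶ Y' // ConeIs f Z'} :=
  Nat.card_congr <| (a.homCongr b).subtypeEquiv fun f =>
    ⟨fun hf => coneIs_of_iso hf a b c (by simp [Iso.homCongr]),
      fun hf => coneIs_of_iso hf a.symm b.symm c.symm (by simp [Iso.homCongr])⟩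

theorem fiberIs_iff_nonempty_iso {L L' : C} {f : X ⟶ L} {g : L ⟶ Y} {w : Y ⟶ X⟦(1 : ℤ)⟧}
    (H : Triangle.mk f g w ∈ distTriang C) : FiberIs w L' ↔ Nonempty (L ≅ L') := by
  constructor
  · rintro ⟨f', g', H'⟩
    obtain ⟨e, -⟩ := exists_iso_of_mor₃_eq H H'
    exact ⟨e⟩
  · rintro ⟨e⟩
    exact ⟨f ≫ e.hom, e.inv ≫ g,
      mem_distTriang_of_iso H (Iso.refl X) e (Iso.refl Y) (by simp) (by simp) (by simp)⟩

theorem fiberIs_iff_coneIs {L : C} {w : Y ⟶ X⟦(1 : ℤ)⟧} : FiberIs w L ↔ ConeIs w (L⟦(1 : ℤ)⟧) := by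
  constructor
  · rintro ⟨f, g, H⟩
    exact ⟨_, _, rotate_rotate_mem_distTriang H⟩
  · rintro ⟨v, u, H⟩
    obtain ⟨f, rfl⟩ := (shiftFunctor C (1 : ℤ)).map_surjective v
    obtain ⟨g, rfl⟩ := (shiftFunctor C (1 : ℤ)).map_surjective u
    refine ⟨-f, -g, mem_distTriang_iff_rotate.2 (mem_distTriang_iff_rotate.2 ?_)⟩
    rwa [Functor.map_neg, Functor.map_neg, neg_neg, neg_neg]

end Cones

section HomotopyCartesian

variable {C : Type u} [Category.{v} C] [Preadditive C] [HasZeroObject C] [HasShift C ℤ]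
  [∀ i : ℤ, (shiftFunctor C i).Additive] [Pretriangulated C]

open Preadditive

/-- A square with top `t`, left side `l`, right side `r` and bottom `b` is homotopy cartesian if
its Mayer–Vietoris sequence `A ⟶ B ⊞ A' ⟶ B'` extends to a distinguished triangle. The
differential `B' ⟶ A[1]` is not part of the data. -/
def IsHomotopyCartesian {A B A' B' : C} (t : A ⟶ B) (l : A ⟶ A') (r : B ⟶ B') (b : A' ⟶ B') :
    Prop :=
  ∃ d : B' ⟶ A⟦(1 : ℤ)⟧, Triangle.mk (biprod.lift t l) (biprod.desc r (-b)) d ∈ distTriang C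

theorem inr_fst_mem_distTriang (A B : C) :
    Triangle.mk (biprod.inr : B ⟶ A ⊞ B) biprod.fst 0 ∈ distTriang C :=
  mem_distTriang_of_iso (binaryBiproductTriangle_distinguished B A) (Iso.refl B)
    (biprod.braiding B A) (Iso.refl A) (by ext <;> simp) (by simp) (by simp)

/-- The shear of the biproduct `B ⊞ A'` along `η : B ⟶ A'`. -/
@[simps]
noncomputable def shear {B A' : C} (η : B ⟶ A') : B ⊞ A' ≅ B ⊞ A' where
  hom := 𝟙 _ + biprod.fst ≫ η ≫ biprod.inr
  inv := 𝟙 _ - biprod.fst ≫ η ≫ biprod.inr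
  hom_inv_id := by simp [add_comp, comp_sub]
  inv_hom_id := by simp [sub_comp, comp_add]

theorem IsHomotopyCartesian.add {A B A' B' : C} {t : A ⟶ B} {l : A ⟶ A'} {r : B ⟶ B'}
    {b : A' ⟶ B'} (h : IsHomotopyCartesian t l r b) (η : B ⟶ A') :
    IsHomotopyCartesian t (l + t ≫ η) (r + η ≫ b) b := by
  obtain ⟨d, H⟩ := h
  exact ⟨d, mem_distTriang_of_iso H (Iso.refl A) (shear η) (Iso.refl B')
    (by ext <;> simp) (by ext <;> simp) (by simp)⟩

variable [IsTriangulated C]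

theorem IsHomotopyCartesian.coneIs {A B A' B' W : C} {t : A ⟶ B} {l : A ⟶ A'} {r : B ⟶ B'}
    {b : A' ⟶ B'} (h : IsHomotopyCartesian t l r b) (hl : ConeIs l W) : ConeIs r W := by
  obtain ⟨d, H⟩ := h
  obtain ⟨v, w, Hl⟩ := hl
  have H_snd := rotate_mem_distTriang (binaryBiproductTriangle_distinguished B A')
  let o := Triangulated.someOctahedron (biprod.lift_snd t l) H H_snd Hl
  refine ⟨o.m₁, o.m₃, mem_distTriang_iff_rotate.2 ?_⟩
  convert o.mem using 2
  rw [neg_comp, ← Functor.map_comp, biprod.inl_desc]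

theorem IsHomotopyCartesian.coneIs_iff {A B A' B' W : C} {t : A ⟶ B} {l : A ⟶ A'} {r : B ⟶ B'}
    {b : A' ⟶ B'} (h : IsHomotopyCartesian t l r b) : ConeIs l W ↔ ConeIs r W := by
  obtain ⟨W', v, w, Hl⟩ := distinguished_cocone_triangle l
  obtain ⟨_, _, Hr⟩ := h.coneIs ⟨v, w, Hl⟩
  rw [coneIs_iff_nonempty_iso Hl, coneIs_iff_nonempty_iso Hr]

theorem exists_isHomotopyCartesian {X L Y A' B' : C} {i : X ⟶ L} {p : L ⟶ Y}
    {α : Y ⟶ X⟦(1 : ℤ)⟧} (H : Triangle.mk i p α ∈ distTriang C) (l : L ⟶ A') {u : A' ⟶ B'}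
    {v : B' ⟶ X⟦(1 : ℤ)⟧} (H' : Triangle.mk (i ≫ l) u v ∈ distTriang C) :
    ∃ r : Y ⟶ B', r ≫ v = α ∧ IsHomotopyCartesian p l r u := by
  obtain ⟨W, w, d, Hw⟩ := distinguished_cocone_triangle (biprod.lift p l)
  let o := Triangulated.someOctahedron (biprod.lift_fst p l) Hw
    (rotate_mem_distTriang (inr_fst_mem_distTriang Y A')) (rotate_mem_distTriang H)
  have m₃_eq : o.m₃ = (i ≫ l)⟦(1 : ℤ)⟧' := by
    have h := congrArg (· ≫ (biprod.snd : Y ⊞ A' ⟶ A')⟦(1 : ℤ)⟧') o.comm₄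
    simpa only [neg_comp, comp_neg, Category.assoc, ← Functor.map_comp, biprod.lift_snd,
      biprod.inr_snd, neg_inj, CategoryTheory.Functor.map_id, Category.comp_id] using h.symm
  have H_inr : Triangle.mk (biprod.inr ≫ w) (-o.m₁) (-(i ≫ l)⟦(1 : ℤ)⟧') ∈ distTriang C := by
    refine mem_distTriang_iff_rotate.2 ?_
    rw [← m₃_eq]
    convert neg_mem_distTriang o.mem using 2
    rw [neg_comp, ← Functor.map_comp]
  obtain ⟨c, hu, hv⟩ :=
    exists_iso_of_mor₃_eq H_inr (neg_mem_distTriang (rotate_mem_distTriang H'))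
  refine ⟨biprod.inl ≫ w ≫ c.hom, ?_, c.inv ≫ d, ?_⟩
  · calc (biprod.inl ≫ w ≫ c.hom) ≫ v = biprod.inl ≫ w ≫ o.m₁ := by
          rw [Category.assoc, Category.assoc, ← neg_inj.1 ((comp_neg _ _).symm.trans hv)]
      _ = α := by rw [o.comm₁, biprod.inl_fst_assoc]
  · exact mem_distTriang_of_iso Hw (Iso.refl L) (Iso.refl _) c (by simp)
      (by ext <;> simp [← hu]) (by simp)

end HomotopyCartesian

section Lifts

variable {C : Type u} [Category.{v} C] [Preadditive C] [HasZeroObject C] [HasShift C ℤ]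
  [∀ i : ℤ, (shiftFunctor C i).Additive] [Pretriangulated C] [IsTriangulated C]
  {X L Y A' B' : C} {i : X ⟶ L} {p : L ⟶ Y} {α : Y ⟶ X⟦(1 : ℤ)⟧} {γ : X ⟶ A'} {u : A' ⟶ B'}
  {v : B' ⟶ X⟦(1 : ℤ)⟧}

open Preadditive

theorem exists_extension_iff_exists_lift (H : Triangle.mk i p α ∈ distTriang C)
    (H' : Triangle.mk γ u v ∈ distTriang C) :
    (∃ l : L ⟶ A', i ≫ l = γ) ↔ ∃ r : Y ⟶ B', r ≫ v = α := by
  constructor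
  · rintro ⟨l, rfl⟩
    obtain ⟨r, hr, -⟩ := exists_isHomotopyCartesian H l H'
    exact ⟨r, hr⟩
  · rintro ⟨r, hr⟩
    have comm : α ≫ (𝟙 X)⟦(1 : ℤ)⟧' = r ≫ v := by
      rw [CategoryTheory.Functor.map_id, Category.comp_id, hr]
    obtain ⟨l, hl, -⟩ := complete_distinguished_triangle_morphism₂ _ _ H H' (𝟙 X) r comm
    exact ⟨l, hl.trans (Category.id_comp γ)⟩

theorem card_extension_mul_card_ker (H : Triangle.mk i p α ∈ distTriang C)
    (H' : Triangle.mk γ u v ∈ distTriang C) (W : C) :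
    Nat.card {l : L ⟶ A' // i ≫ l = γ ∧ ConeIs l W} * Nat.card (leftComp A' p).ker =
      Nat.card {r : Y ⟶ B' // r ≫ v = α ∧ ConeIs r W} * Nat.card (rightComp Y u).ker := by
  by_cases h : ∃ l : L ⟶ A', i ≫ l = γ
  · obtain ⟨l, rfl⟩ := h
    obtain ⟨r, rfl, hlr⟩ := exists_isHomotopyCartesian H l H'
    calc _ = Nat.card {η : Y ⟶ A' // ConeIs (l + p ≫ η) W} :=
          card_fiber_mul_card_ker (range_leftComp_eq_ker H A') (ConeIs · W) l
      _ = Nat.card {η : Y ⟶ A' // ConeIs (r + η ≫ u) W} :=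
          Nat.card_congr (Equiv.subtypeEquivRight fun η => (hlr.add η).coneIs_iff)
      _ = _ := (card_fiber_mul_card_ker (range_rightComp_eq_ker (rotate_mem_distTriang H') Y)
          (ConeIs · W) r).symm
  · have no_extension : IsEmpty {l : L ⟶ A' // i ≫ l = γ ∧ ConeIs l W} :=
      ⟨fun l => h ⟨l, l.2.1⟩⟩
    have no_lift : IsEmpty {r : Y ⟶ B' // r ≫ v = α ∧ ConeIs r W} :=
      ⟨fun r => h ((exists_extension_iff_exists_lift H H').2 ⟨r, r.2.1⟩)⟩
    rw [@Nat.card_of_isEmpty _ no_extension, @Nat.card_of_isEmpty _ no_lift, zero_mul, zero_mul]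

variable [∀ X Y : C, Finite (X ⟶ Y)] [LeftLocallyHomologicallyFinite C]

theorem card_extension_mul (H : Triangle.mk i p α ∈ distTriang C)
    (H' : Triangle.mk γ u v ∈ distTriang C) (W : C) :
    (Nat.card {l : L ⟶ A' // i ≫ l = γ ∧ ConeIs l W} : ℚ) *
        (homAlternatingProd L A' * homAlternatingProd Y (X⟦(1 : ℤ)⟧)) =
      Nat.card {r : Y ⟶ B' // r ≫ v = α ∧ ConeIs r W} *
        (homAlternatingProd Y B' * homAlternatingProd X A') := by
  have h := congrArg (Nat.cast (R := ℚ)) (card_extension_mul_card_ker H H' W)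
  push_cast at h
  rw [← card_ker_leftComp_mul H A', ← card_ker_rightComp_mul (rotate_mem_distTriang H') Y]
  linear_combination (homAlternatingProd X A' * homAlternatingProd Y A' *
    homAlternatingProd Y (X⟦(1 : ℤ)⟧)) * h

end Lifts

section Associativity

variable {C : Type u} [Category.{v} C]

theorem nonempty_iso_out_iff {A : C} {q : Quotient (isIsomorphicSetoid C)} :
    Nonempty (A ≅ q.out) ↔ Quotient.mk (isIsomorphicSetoid C) A = q := by
  rw [Quotient.mk_eq_iff_out]
  rfl

variable [Preadditive C] [HasZeroObject C] [HasShift C ℤ]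
  [∀ i : ℤ, (shiftFunctor C i).Additive] [Pretriangulated C] {X Y : C}

theorem exists_fiberIs (w : Y ⟶ X⟦(1 : ℤ)⟧) : ∃ L, FiberIs w L :=
  distinguished_cocone_triangle₂ w

/-- The isomorphism class of the fibre of `w : Y ⟶ X[1]`. -/
noncomputable def fiberClass (w : Y ⟶ X⟦(1 : ℤ)⟧) : Quotient (isIsomorphicSetoid C) :=
  Quotient.mk _ (exists_fiberIs w).choose

theorem fiberIs_out_iff {w : Y ⟶ X⟦(1 : ℤ)⟧} {q : Quotient (isIsomorphicSetoid C)} :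
    FiberIs w q.out ↔ fiberClass w = q := by
  obtain ⟨_, _, H⟩ := (exists_fiberIs w).choose_spec
  rw [fiberIs_iff_nonempty_iso H, nonempty_iso_out_iff, fiberClass]

theorem finsum_card_fiberIs_mul [Fintype (Y ⟶ X⟦(1 : ℤ)⟧)]
    (F : Quotient (isIsomorphicSetoid C) → ℚ) :
    ∑ᶠ q : Quotient (isIsomorphicSetoid C),
      (Nat.card {w : Y ⟶ X⟦(1 : ℤ)⟧ // FiberIs w q.out} : ℚ) * F q =
        ∑ w : Y ⟶ X⟦(1 : ℤ)⟧, F (fiberClass w) := by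
  simp only [fiberIs_out_iff]
  exact finsum_card_fiber_mul fiberClass F

variable [∀ X Y : C, Finite (X ⟶ Y)] [LeftLocallyHomologicallyFinite C]

theorem finite_support_hallNumber (X Y : C) :
    (Function.support fun q : Quotient (isIsomorphicSetoid C) => hallNumber X Y q.out).Finite := by
  refine (Set.finite_range (fiberClass (X := X) (Y := Y))).subset fun q hq => ?_
  by_contra hq'
  have : IsEmpty {w : Y ⟶ X⟦(1 : ℤ)⟧ // FiberIs w q.out} :=
    ⟨fun w => hq' ⟨w, fiberIs_out_iff.1 w.2⟩⟩
  exact hq (by simp [hallNumber_eq])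

theorem hallNumber_mul_hallNumber_right (X Y Z L M : C) :
    hallNumber X Y L * hallNumber Z L M = Nat.card {α : Y ⟶ X⟦(1 : ℤ)⟧ // FiberIs α L} *
      (Nat.card {β : L ⟶ Z⟦(1 : ℤ)⟧ // FiberIs β M} *
        (homAlternatingProd L (Z⟦(1 : ℤ)⟧) * homAlternatingProd Y (X⟦(1 : ℤ)⟧)) *
        (autWeight M / (autWeight X * autWeight Y * autWeight Z))) := by
  have := autWeight_ne_zero L
  rw [hallNumber_eq, hallNumber_eq]
  field_simp

theorem hallNumber_mul_hallNumber_left (X Y Z L M : C) :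
    hallNumber Z X L * hallNumber L Y M = Nat.card {γ : X ⟶ Z⟦(1 : ℤ)⟧ // FiberIs γ L} *
      (Nat.card {β : Y ⟶ L⟦(1 : ℤ)⟧ // FiberIs β M} *
        (homAlternatingProd Y (L⟦(1 : ℤ)⟧) * homAlternatingProd X (Z⟦(1 : ℤ)⟧)) *
        (autWeight M / (autWeight X * autWeight Y * autWeight Z))) := by
  have := autWeight_ne_zero L
  rw [hallNumber_eq, hallNumber_eq]
  field_simp

variable [IsTriangulated C] {Z L L' : C} {i : X ⟶ L} {p : L ⟶ Y} {α : Y ⟶ X⟦(1 : ℤ)⟧}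
  {j : Z ⟶ L'} {q : L' ⟶ X} {γ : X ⟶ Z⟦(1 : ℤ)⟧}

theorem card_extension_fiberIs_mul (H : Triangle.mk i p α ∈ distTriang C)
    (H' : Triangle.mk j q γ ∈ distTriang C) (M : C) :
    (Nat.card {β : L ⟶ Z⟦(1 : ℤ)⟧ // i ≫ β = γ ∧ FiberIs β M} : ℚ) *
        (homAlternatingProd L (Z⟦(1 : ℤ)⟧) * homAlternatingProd Y (X⟦(1 : ℤ)⟧)) =
      Nat.card {β : Y ⟶ L'⟦(1 : ℤ)⟧ // β ≫ q⟦(1 : ℤ)⟧' = α ∧ FiberIs β M} *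
        (homAlternatingProd Y (L'⟦(1 : ℤ)⟧) * homAlternatingProd X (Z⟦(1 : ℤ)⟧)) := by
  simp only [fiberIs_iff_coneIs]
  exact card_extension_mul H (rotate_rotate_mem_distTriang H') (M⟦(1 : ℤ)⟧)

theorem finsum_hallNumber_mul_hallNumber (X Y Z M : C) :
    ∑ᶠ q : Quotient (isIsomorphicSetoid C), hallNumber X Y q.out * hallNumber Z q.out M =
      ∑ᶠ q : Quotient (isIsomorphicSetoid C), hallNumber Z X q.out * hallNumber q.out Y M := by
  have := Fintype.ofFinite (Y ⟶ X⟦(1 : ℤ)⟧)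
  have := Fintype.ofFinite (X ⟶ Z⟦(1 : ℤ)⟧)
  choose i p Hα using fun α : Y ⟶ X⟦(1 : ℤ)⟧ => fiberIs_out_iff.2 (rfl : fiberClass α = _)
  choose j q Hγ using fun γ : X ⟶ Z⟦(1 : ℤ)⟧ => fiberIs_out_iff.2 (rfl : fiberClass γ = _)
  simp only [hallNumber_mul_hallNumber_right, hallNumber_mul_hallNumber_left,
    finsum_card_fiberIs_mul]
  have sum_extensions (α : Y ⟶ X⟦(1 : ℤ)⟧) := congrArg (Nat.cast (R := ℚ))
    (card_subtype_eq_sum_card_fiber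
      (fun β : (fiberClass α).out ⟶ Z⟦(1 : ℤ)⟧ => FiberIs β M) (i α ≫ ·))
  have sum_lifts (γ : X ⟶ Z⟦(1 : ℤ)⟧) := congrArg (Nat.cast (R := ℚ))
    (card_subtype_eq_sum_card_fiber
      (fun β : Y ⟶ (fiberClass γ).out⟦(1 : ℤ)⟧ => FiberIs β M) (· ≫ (q γ)⟦(1 : ℤ)⟧'))
  simp only [sum_extensions, sum_lifts, Nat.cast_sum, Finset.sum_mul]
  rw [Finset.sum_comm]
  refine Finset.sum_congr rfl fun γ _ => Finset.sum_congr rfl fun α _ => ?_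
  rw [card_extension_fiberIs_mul (Hα α) (Hγ γ) M]

end Associativity

section Unit

variable {C : Type u} [Category.{v} C] [Preadditive C] [HasZeroObject C] [HasShift C ℤ]
  [∀ i : ℤ, (shiftFunctor C i).Additive]

theorem homAlternatingProd_zero_left (W : C) : homAlternatingProd 0 W = 1 :=
  homAlternatingProd_eq_one fun i _ =>
    ⟨((shiftFunctor C (i : ℤ)).map_isZero (isZero_zero C)).eq_of_src⟩

variable [Pretriangulated C]

theorem hallNumber_congr {X X' Y Y' L L' : C} (a : X ≅ X') (b : Y ≅ Y') (e : L ≅ L') :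
    hallNumber X Y L = hallNumber X' Y' L' := by
  rw [hallNumber, hallNumber, card_coneIs_congr a e b, homAlternatingProd_congr a e]
  exact congrArg _ (autWeight_congr a)

theorem coneIs_zero_iff {A L : C} (f : A ⟶ L) : ConeIs f 0 ↔ IsIso f := by
  constructor
  · rintro ⟨g, h, H⟩
    exact (Triangle.isZero₃_iff_isIso₁ _ H).1 (isZero_zero C)
  · intro hf
    exact ⟨0, 0, (Triangle.distinguished_iff_of_isZero₃ (.mk f 0 0) (isZero_zero C)).2 hf⟩

theorem card_coneIs_zero (A : C) : Nat.card {f : A ⟶ A // ConeIs f 0} = Nat.card (Aut A) := by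
  refine (Nat.card_eq_of_bijective
    (fun e : Aut A => ⟨e.hom, (coneIs_zero_iff _).2 (Iso.isIso_hom e)⟩) ⟨?_, ?_⟩).symm
  · exact fun e e' he => Iso.ext (congrArg Subtype.val he)
  · rintro ⟨f, hf⟩
    have := (coneIs_zero_iff f).1 hf
    exact ⟨asIso f, rfl⟩

theorem hallNumber_zero_right_of_isEmpty {A L : C} (h : IsEmpty (A ≅ L)) :
    hallNumber A 0 L = 0 := by
  have : IsEmpty {f : A ⟶ L // ConeIs f 0} :=
    ⟨fun f => have := (coneIs_zero_iff f.1).1 f.2; h.false (asIso f.1)⟩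
  simp [hallNumber]

theorem hallNumber_zero_left_of_isEmpty {A L : C} (h : IsEmpty (A ≅ L)) :
    hallNumber 0 A L = 0 := by
  have : IsEmpty {f : (0 : C) ⟶ L // ConeIs f A} := by
    refine ⟨?_⟩
    rintro ⟨f, g, h', H⟩
    have : IsIso g := (Triangle.isZero₁_iff_isIso₂ _ H).1 (isZero_zero C)
    exact h.false (asIso g).symm
  simp [hallNumber]

theorem hallNumber_zero_left_of_iso {A L : C} (e : A ≅ L) : hallNumber 0 A L = 1 := by
  have unique_mor (B : C) : Subsingleton ((0 : C) ⟶ B) := ⟨(isZero_zero C).eq_of_src⟩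
  have : Unique {f : (0 : C) ⟶ A // ConeIs f A} :=
    ⟨⟨0, 𝟙 A, 0, contractible_distinguished₁ A⟩, fun _ => Subsingleton.elim _ _⟩
  have : Unique (Aut (0 : C)) := ⟨⟨Iso.refl 0⟩, fun _ => Iso.ext (Subsingleton.elim _ _)⟩
  rw [hallNumber_congr (Iso.refl 0) (Iso.refl A) e.symm, hallNumber, homAlternatingProd_zero_left,
    homAlternatingProd_zero_left, Nat.card_unique, Nat.card_unique]
  norm_num

variable [∀ X Y : C, Finite (X ⟶ Y)] [LeftLocallyHomologicallyFinite C]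

theorem hallNumber_zero_right_of_iso {A L : C} (e : A ≅ L) : hallNumber A 0 L = 1 := by
  rw [hallNumber_congr (Iso.refl A) (Iso.refl 0) e.symm, hallNumber, card_coneIs_zero]
  exact div_self (autWeight_ne_zero A)

end Unit

end DerivedHall

open DerivedHall in
theorem stmt13_general {C : Type u} [Category.{v} C] [Preadditive C] [HasZeroObject C]
    [HasShift C ℤ] [∀ i : ℤ, (shiftFunctor C i).Additive] [Pretriangulated C] [IsTriangulated C]
    [∀ X Y : C, Finite (X ⟶ Y)]
    (hhfin : ∀ X Y : C, ∃ N : ℕ, ∀ i ≥ N, ∀ f : X⟦(i : ℤ)⟧ ⟶ Y, f = 0)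
    (X Y Z M : C) :
    (∀ (A A' B B' L L' : C), Nonempty (A ≅ A') → Nonempty (B ≅ B') → Nonempty (L ≅ L') →
        hallNumber A B L = hallNumber A' B' L') ∧
    (∀ (A B : C), (Function.support (fun q : Quotient (isIsomorphicSetoid C) =>
        hallNumber A B (Quotient.out q))).Finite) ∧
    (Function.support (fun q : Quotient (isIsomorphicSetoid C) =>
        hallNumber X Y (Quotient.out q) * hallNumber Z (Quotient.out q) M)).Finite ∧
    (Function.support (fun q : Quotient (isIsomorphicSetoid C) =>
        hallNumber Z X (Quotient.out q) * hallNumber (Quotient.out q) Y M)).Finite ∧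
    (∑ᶠ q : Quotient (isIsomorphicSetoid C),
        hallNumber X Y (Quotient.out q) * hallNumber Z (Quotient.out q) M) =
      (∑ᶠ q : Quotient (isIsomorphicSetoid C),
        hallNumber Z X (Quotient.out q) * hallNumber (Quotient.out q) Y M) ∧
    (∀ (A : C) (q : Quotient (isIsomorphicSetoid C)),
        (q = Quotient.mk (isIsomorphicSetoid C) A → hallNumber A 0 (Quotient.out q) = 1) ∧
        (q ≠ Quotient.mk (isIsomorphicSetoid C) A → hallNumber A 0 (Quotient.out q) = 0)) ∧
    (∀ (A : C) (q : Quotient (isIsomorphicSetoid C)),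
        (q = Quotient.mk (isIsomorphicSetoid C) A → hallNumber 0 A (Quotient.out q) = 1) ∧
        (q ≠ Quotient.mk (isIsomorphicSetoid C) A → hallNumber 0 A (Quotient.out q) = 0)) := by
  have : LeftLocallyHomologicallyFinite C :=
    ⟨fun A W => (hhfin A W).imp fun N h i hi => subsingleton_of_forall_eq 0 (h i hi)⟩
  have support_mul (A B : C) (F : Quotient (isIsomorphicSetoid C) → ℚ) :
      (Function.support fun q => hallNumber A B q.out * F q).Finite :=
    (finite_support_hallNumber A B).subset fun q => left_ne_zero_of_mul
  have isEmpty_iso_out {A : C} {q : Quotient (isIsomorphicSetoid C)} (h : q ≠ Quotient.mk _ A) :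
      IsEmpty (A ≅ q.out) := not_nonempty_iff.1 fun e => h (nonempty_iso_out_iff.1 e).symm
  refine ⟨?_, finite_support_hallNumber, support_mul X Y _, support_mul Z X _,
    finsum_hallNumber_mul_hallNumber X Y Z M, fun A q => ⟨fun h => ?_, fun h => ?_⟩,
    fun A q => ⟨fun h => ?_, fun h => ?_⟩⟩
  · rintro A A' B B' L L' ⟨a⟩ ⟨b⟩ ⟨e⟩
    exact hallNumber_congr a b e
  · exact hallNumber_zero_right_of_iso (nonempty_iso_out_iff.2 h.symm).some
  · exact hallNumber_zero_right_of_isEmpty (isEmpty_iso_out h)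
  · exact hallNumber_zero_left_of_iso (nonempty_iso_out_iff.2 h.symm).some
  · exact hallNumber_zero_left_of_isEmpty (isEmpty_iso_out h)

/-- associativity and unitality of the derived Hall algebra.  The derived
Hall numbers only depend on isomorphism classes, the Hall products `u_[X] * u_[Y]` have
finitely many nonzero structure constants, the multiplication is associative and `u_[0]`
is a unit; hence the `ℚ`-vector space on the isomorphism classes of objects of `C` is an
associative unital algebra. -/
theorem stmt13 {k : Type*} [Field k] [Finite k]
    {C : Type u} [CategoryTheory.Category.{v} C] [Preadditive C] [CategoryTheory.Linear k C]
    [HasZeroObject C] [HasBinaryBiproducts C] [HasShift C ℤ]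
    [∀ i : ℤ, (CategoryTheory.shiftFunctor C i).Additive] [Pretriangulated C]
    [IsTriangulated C]
    [∀ X Y : C, FiniteDimensional k (X ⟶ Y)]
    (hloc : ∀ X : C, Indecomposable X → IsLocalRing (CategoryTheory.End X))
    (hhfin : ∀ X Y : C, ∃ N : ℕ, ∀ i ≥ N, ∀ f : X⟦(i : ℤ)⟧ ⟶ Y, f = 0)
    (X Y Z M : C) :
    -- the Hall numbers only depend on isomorphism classes
    (∀ (A A' B B' L L' : C), Nonempty (A ≅ A') → Nonempty (B ≅ B') → Nonempty (L ≅ L') →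
        hallNumber A B L = hallNumber A' B' L') ∧
    -- the structure constants of each product have finite support over iso classes
    (∀ (A B : C), (Function.support (fun q : Quotient (isIsomorphicSetoid C) =>
        hallNumber A B (Quotient.out q))).Finite) ∧
    (Function.support (fun q : Quotient (isIsomorphicSetoid C) =>
        hallNumber X Y (Quotient.out q) * hallNumber Z (Quotient.out q) M)).Finite ∧
    (Function.support (fun q : Quotient (isIsomorphicSetoid C) =>
        hallNumber Z X (Quotient.out q) * hallNumber (Quotient.out q) Y M)).Finite ∧
    -- associativity: `∑_[L] F_{XY}^L F_{ZL}^M = ∑_[L'] F_{ZX}^{L'} F_{L'Y}^M`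
    (∑ᶠ q : Quotient (isIsomorphicSetoid C),
        hallNumber X Y (Quotient.out q) * hallNumber Z (Quotient.out q) M) =
      (∑ᶠ q : Quotient (isIsomorphicSetoid C),
        hallNumber Z X (Quotient.out q) * hallNumber (Quotient.out q) Y M) ∧
    -- `u_[0]` is a right unit: `F_{A,0}^L = δ_{[L],[A]}`
    (∀ (A : C) (q : Quotient (isIsomorphicSetoid C)),
        (q = Quotient.mk (isIsomorphicSetoid C) A → hallNumber A 0 (Quotient.out q) = 1) ∧
        (q ≠ Quotient.mk (isIsomorphicSetoid C) A → hallNumber A 0 (Quotient.out q) = 0)) ∧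
    -- `u_[0]` is a left unit: `F_{0,A}^L = δ_{[L],[A]}`
    (∀ (A : C) (q : Quotient (isIsomorphicSetoid C)),
        (q = Quotient.mk (isIsomorphicSetoid C) A → hallNumber 0 A (Quotient.out q) = 1) ∧
        (q ≠ Quotient.mk (isIsomorphicSetoid C) A → hallNumber 0 A (Quotient.out q) = 0)) := by
  have : ∀ X Y : C, Finite (X ⟶ Y) := fun _ _ => Module.finite_of_finite k
  exact stmt13_general hhfin X Y Z M
end
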